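/- Fix an integer m ≥ 1 and let F : ℝ^m → ℝ. The following are equivalent: (1) F applied entrywise maps every m-tuple of moment sequences of admissible measures supported in [−1,1] to a moment sequence of an admissible measure on ℝ, i.e., for all admissible μ₁,…,μ_m supported in [−1,1] there is an admissible measure σ on ℝ with F(s_k(μ₁),…,s_k(μ_m)) = s_k(σ) for all k ≥ 0; (2) for every N ≥ 1 and every m-tuple (A₁,…,A_m) of N×N real positive semidefinite matrices, the matrix F[A₁,…,A_m] with (i,j) entry F(a_{1,ij},…,a_{m,ij}) is positive semidefinite; (3) F is absolutely monotonic on [0,∞)^m (continuous on [0,∞)^m with all mixed partial derivatives D^α F existing and non-negative on the interior (0,∞)^m) and F agrees on ℝ^m with the restriction of an entire function on ℂ^m; equivalently, F(x) = ∑_{α∈ℕ₀^m} c_α x^α with all c_α ≥ 0 and the series converging for every x ∈ ℝ^m. -/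

import Mathlib

open MeasureTheory

/-- An admissible measure: a non-negative Borel measure on `ℝ` all of whose absolute
moments are finite. -/
def IsAdmissible (μ : Measure ℝ) : Prop := ∀ k : ℕ, Integrable (fun x => x ^ k) μ

/-- The `k`-th power moment of a measure. -/
noncomputable def moment (μ : Measure ℝ) (k : ℕ) : ℝ := ∫ x, x ^ k ∂μ

/-!
Either of the first two conditions makes `F` preserve positivity of the Hankel forms of moment
sequences of measures on `[-1, 1]`, and this alone forces the series. Measures with a few atoms
give monotonicity on the positive orthant and continuity.

For one variable, let `L` be the functional `X ^ k ↦ f (s k)` attached to a moment sequence `s`.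
Its positivity on `(1 - X ^ 2) ^ n * (1 ± X)`, for measures with atoms at `±1` and `±r`, bounds the
odd values of `f` by the even ones and shows that all forward differences of
`x ↦ f (|a| + 2 * exp x) ± f (a + exp x)` are non-negative. The Bernstein polynomials of these
functions therefore have non-negative coefficients, and in the limit `f` is analytic. Its Taylor
coefficients on `[0, ∞)` are non-negative, so `f` is an everywhere convergent power series with
non-negative coefficients.

For several variables, `F` along a polynomial curve with non-negative coefficients is then such a
series in the parameter. The homogeneous parts of `F`, and after them the coefficients with respect
to one variable at a time, are recovered as functions of the same kind: in `∑ gₙ(y) tⁿ` put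
`t = θ y ^ N` with `N` large, which separates the polynomials already found from the next
coefficient as `θ → 0`, and use the polynomial growth of that coefficient. All terms are
non-negative, so the sums combine to a multivariable series on the open positive orthant. Continuity
extends it to the closed orthant, and uniqueness of one-variable coefficients along a curve joining
`|x|` at `1` to `x` at `-1` extends it to all `x`.

Conversely, such a series preserves positive semidefiniteness by the Schur product theorem, and
maps moments to moments because products of moments are moments of multiplicative convolutions.
-/

namespace MomentTransform

open Filter Topology Polynomial
open scoped NNReal

section MomentSequences

variable {μ ν : Measure ℝ} {s : ℕ → ℝ}

lemma isFiniteMeasure_of_isAdmissible (h : IsAdmissible μ) : IsFiniteMeasure μ :=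
  (integrable_const_iff_isFiniteMeasure one_ne_zero).1 (by simpa only [pow_zero] using h 0)

lemma isAdmissible_of_ae_mem_Icc [IsFiniteMeasure μ] (h : ∀ᵐ x ∂μ, x ∈ Set.Icc (-1 : ℝ) 1) :
    IsAdmissible μ := by
  refine fun k => Integrable.of_bound (by fun_prop) 1 ?_
  filter_upwards [h] with x hx
  rw [norm_pow]
  exact pow_le_one₀ (norm_nonneg x) (abs_le.2 hx)

lemma integral_norm_pow_le_moment_zero (hμ : IsAdmissible μ)
    (h : ∀ᵐ x ∂μ, x ∈ Set.Icc (-1 : ℝ) 1) (k : ℕ) : ∫ x, ‖x ^ k‖ ∂μ ≤ moment μ 0 := by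
  refine integral_mono_ae (hμ k).norm (hμ 0) ?_
  filter_upwards [h] with x hx
  rw [norm_pow, pow_zero]
  exact pow_le_one₀ (norm_nonneg x) (abs_le.2 hx)

/-- The pushforward of `μ ⊗ ν` under multiplication; its moments are the products of the moments
of `μ` and `ν`. -/
noncomputable def mulConv (μ ν : Measure ℝ) : Measure ℝ := (μ.prod ν).map fun z => z.1 * z.2

lemma moment_mulConv [SFinite μ] [SFinite ν] :
    moment (mulConv μ ν) = moment μ * moment ν := by
  funext k
  rw [moment, mulConv, integral_map (by fun_prop) (by fun_prop)]
  simp only [mul_pow]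
  exact integral_prod_mul (fun x => x ^ k) (fun x => x ^ k)

lemma ae_mulConv_mem_Icc [SFinite μ] [SFinite ν] (hμ : ∀ᵐ x ∂μ, x ∈ Set.Icc (-1 : ℝ) 1)
    (hν : ∀ᵐ x ∂ν, x ∈ Set.Icc (-1 : ℝ) 1) : ∀ᵐ x ∂mulConv μ ν, x ∈ Set.Icc (-1 : ℝ) 1 := by
  refine (ae_map_iff (by fun_prop) measurableSet_Icc).2 ?_
  filter_upwards [Measure.quasiMeasurePreserving_fst.ae hμ,
    Measure.quasiMeasurePreserving_snd.ae hν] with z hz₁ hz₂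
  rw [← abs_le, abs_mul]
  exact mul_le_one₀ (abs_le.2 hz₁) (abs_nonneg _) (abs_le.2 hz₂)

/-- The moment sequences of the admissible measures carried by `[-1, 1]`. They are closed under
sums, non-negative multiples and, by `mulConv`, termwise products. -/
noncomputable def momentAlgebra : Subalgebra ℝ≥0 (ℕ → ℝ) where
  carrier := {s | ∃ μ, IsAdmissible μ ∧ μ (Set.Icc (-1 : ℝ) 1)ᶜ = 0 ∧ moment μ = s}
  add_mem' := by
    rintro _ _ ⟨μ, hμ, hμI, rfl⟩ ⟨ν, hν, hνI, rfl⟩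
    refine ⟨μ + ν, fun k => (hμ k).add_measure (hν k), by simp [hμI, hνI], ?_⟩
    exact funext fun k => integral_add_measure (hμ k) (hν k)
  mul_mem' := by
    rintro _ _ ⟨μ, hμ, hμI, rfl⟩ ⟨ν, hν, hνI, rfl⟩
    have := isFiniteMeasure_of_isAdmissible hμ
    have := isFiniteMeasure_of_isAdmissible hν
    have hI := ae_mulConv_mem_Icc hμI hνI
    have : IsFiniteMeasure (mulConv μ ν) := Measure.isFiniteMeasure_map _ _
    exact ⟨_, isAdmissible_of_ae_mem_Icc hI, hI, moment_mulConv⟩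
  algebraMap_mem' c := by
    refine ⟨c • Measure.dirac 1, isAdmissible_of_ae_mem_Icc ?_, by simp, ?_⟩
    · exact Measure.ae_smul_measure (by simp [ae_dirac_eq]) c
    · funext k
      rw [moment, integral_smul_nnreal_measure, integral_dirac, one_pow]
      exact mul_one (c : ℝ)

lemma mem_momentAlgebra :
    s ∈ momentAlgebra ↔
      ∃ μ, IsAdmissible μ ∧ μ (Set.Icc (-1 : ℝ) 1)ᶜ = 0 ∧ moment μ = s :=
  Iff.rfl

lemma geometric_mem_momentAlgebra {u : ℝ} (hu : u ∈ Set.Icc (-1 : ℝ) 1) :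
    (fun k => u ^ k) ∈ momentAlgebra := by
  have hI : ∀ᵐ x ∂Measure.dirac u, x ∈ Set.Icc (-1 : ℝ) 1 := by rwa [ae_dirac_eq]
  exact ⟨Measure.dirac u, isAdmissible_of_ae_mem_Icc hI, hI, funext fun k => by simp [moment]⟩

lemma const_mul_mem_momentAlgebra {c : ℝ} (hc : 0 ≤ c) (hs : s ∈ momentAlgebra) :
    (fun k => c * s k) ∈ momentAlgebra :=
  momentAlgebra.smul_mem hs ⟨c, hc⟩

lemma atom_mem_momentAlgebra {w u : ℝ} (hw : 0 ≤ w) (hu : u ∈ Set.Icc (-1 : ℝ) 1) :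
    (fun k => w * u ^ k) ∈ momentAlgebra :=
  const_mul_mem_momentAlgebra hw (geometric_mem_momentAlgebra hu)

lemma const_mem_momentAlgebra {c : ℝ} (hc : 0 ≤ c) : (fun _ => c) ∈ momentAlgebra := by
  simpa only [Pi.one_apply, mul_one] using const_mul_mem_momentAlgebra hc (one_mem momentAlgebra)

lemma eval_mem_momentAlgebra {P : ℝ[X]} (hP : ∀ n, 0 ≤ P.coeff n) (hs : s ∈ momentAlgebra) :
    (fun k => P.eval (s k)) ∈ momentAlgebra := by
  have heval : (fun k => P.eval (s k)) =
      ∑ n ∈ Finset.range (P.natDegree + 1), fun k => P.coeff n * (s ^ n) k := by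
    funext k
    simp only [Finset.sum_apply, Pi.pow_apply, eval_eq_sum_range]
  rw [heval]
  exact sum_mem fun n _ => const_mul_mem_momentAlgebra (hP n) (pow_mem hs n)

lemma even_nonneg_of_mem_momentAlgebra (hs : s ∈ momentAlgebra) {k : ℕ} (hk : Even k) :
    0 ≤ s k := by
  obtain ⟨μ, -, -, rfl⟩ := hs
  exact integral_nonneg fun x => hk.pow_nonneg x

lemma le_apply_zero_of_mem_momentAlgebra (hs : s ∈ momentAlgebra) (k : ℕ) : s k ≤ s 0 := by
  obtain ⟨μ, hμ, hI, rfl⟩ := hs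
  exact (integral_mono (hμ k) (hμ k).norm fun x => le_abs_self _).trans
    (integral_norm_pow_le_moment_zero hμ hI k)

end MomentSequences

section RieszFunctional

/-- The Riesz functional of a sequence: the linear functional on polynomials with values `s k`
on `X ^ k`. -/
noncomputable def rieszFunctional (s : ℕ → ℝ) : ℝ[X] →ₗ[ℝ] ℝ :=
  Polynomial.lsum fun k => s k • LinearMap.id

lemma rieszFunctional_monomial (s : ℕ → ℝ) (k : ℕ) (c : ℝ) :
    rieszFunctional s (monomial k c) = s k * c := by
  simp [rieszFunctional, Polynomial.lsum, Polynomial.sum_monomial_index]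

lemma rieszFunctional_X_pow (s : ℕ → ℝ) (k : ℕ) : rieszFunctional s (X ^ k) = s k := by
  rw [← monomial_one_right_eq_X_pow, rieszFunctional_monomial, mul_one]

lemma integrable_eval_of_isAdmissible {σ : Measure ℝ} (h : IsAdmissible σ) (p : ℝ[X]) :
    Integrable (fun x => p.eval x) σ := by
  simp only [eval_eq_sum_range]
  exact integrable_finsetSum _ fun k _ => (h k).const_mul _

lemma rieszFunctional_moment {σ : Measure ℝ} (h : IsAdmissible σ) (p : ℝ[X]) :
    rieszFunctional (moment σ) p = ∫ x, p.eval x ∂σ := by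
  induction p using Polynomial.induction_on' with
  | add p q hp hq =>
    simp only [eval_add]
    rw [map_add, hp, hq, integral_add (integrable_eval_of_isAdmissible h p)
      (integrable_eval_of_isAdmissible h q)]
  | monomial k c =>
    simp only [eval_monomial]
    rw [rieszFunctional_monomial, integral_const_mul, mul_comm, moment]

/-- A functional is positive when it is non-negative on squares. -/
def IsPositive (L : ℝ[X] →ₗ[ℝ] ℝ) : Prop := ∀ q, 0 ≤ L (q * q)

lemma isPositive_rieszFunctional_moment {σ : Measure ℝ} (h : IsAdmissible σ) :
    IsPositive (rieszFunctional (moment σ)) := by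
  intro q
  rw [rieszFunctional_moment h]
  simp only [eval_mul]
  exact integral_nonneg fun x => mul_self_nonneg (q.eval x)

lemma rieszFunctional_sum_monomial_mul_self (s : ℕ → ℝ) {N : ℕ} (v : Fin N → ℝ) :
    rieszFunctional s ((∑ i : Fin N, monomial i (v i)) * ∑ i : Fin N, monomial i (v i)) =
      v ⬝ᵥ (Matrix.of fun i j : Fin N => s (i + j)).mulVec v := by
  rw [Finset.sum_mul_sum]
  simp only [monomial_mul_monomial, map_sum, rieszFunctional_monomial, dotProduct, Matrix.mulVec,
    Finset.mul_sum, Matrix.of_apply]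
  exact Finset.sum_congr rfl fun i _ => Finset.sum_congr rfl fun j _ => by ring

lemma isPositive_rieszFunctional_iff {s : ℕ → ℝ} :
    IsPositive (rieszFunctional s) ↔
      ∀ N, (Matrix.of fun i j : Fin N => s (i + j)).PosSemidef := by
  refine ⟨fun h N => .of_dotProduct_mulVec_nonneg ?_ fun v => ?_, fun h q => ?_⟩
  · ext i j
    simp [add_comm]
  · rw [star_trivial, ← rieszFunctional_sum_monomial_mul_self]
    exact h _
  · have hq : q = ∑ i : Fin (q.natDegree + 1), monomial i (q.coeff i) := by
      rw [← Finset.sum_range fun i => monomial i (q.coeff i), ← q.as_sum_range]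
    rw [hq, rieszFunctional_sum_monomial_mul_self]
    exact (h _).dotProduct_mulVec_nonneg _

end RieszFunctional

section PositiveFunctional

lemma apply_one_le_apply_zero_of_bddAbove {a : ℕ → ℝ} (hconv : ∀ k, 2 * a (k + 1) ≤ a k + a (k + 2))
    (hbdd : BddAbove (Set.range a)) : a 1 ≤ a 0 := by
  obtain ⟨C, hC⟩ := hbdd
  by_contra! hlt
  have hincr : ∀ k, a 1 - a 0 ≤ a (k + 1) - a k := fun k => by
    induction k with
    | zero => simp
    | succ k ih => linarith [hconv k]
  have hlinear : ∀ k : ℕ, a 0 + k * (a 1 - a 0) ≤ a k := fun k => by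
    induction k with
    | zero => simp
    | succ k ih => push_cast; linarith [hincr k]
  obtain ⟨n, hn⟩ := exists_nat_gt ((C - a 0) / (a 1 - a 0))
  rw [div_lt_iff₀ (by linarith)] at hn
  linarith [hlinear n, hC (Set.mem_range_self n)]

variable {L : ℝ[X] →ₗ[ℝ] ℝ} {C : ℝ}

lemma exists_abs_map_mul_X_pow_le (hL : ∀ k, |L (X ^ k)| ≤ C) (q : ℝ[X]) :
    ∃ B, ∀ k, |L (q * X ^ k)| ≤ B := by
  induction q using Polynomial.induction_on' with
  | add p q hp hq =>
    obtain ⟨A, hA⟩ := hp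
    obtain ⟨B, hB⟩ := hq
    refine ⟨A + B, fun k => ?_⟩
    rw [add_mul, map_add]
    exact (abs_add_le _ _).trans (add_le_add (hA k) (hB k))
  | monomial n a =>
    refine ⟨|a| * C, fun k => ?_⟩
    rw [← smul_X_eq_monomial, smul_mul_assoc, ← pow_add, map_smul, smul_eq_mul, abs_mul]
    exact mul_le_mul_of_nonneg_left (hL _) (abs_nonneg _)

lemma IsPositive.abs_map_X_pow_le (hL : IsPositive L) (heven : ∀ k, Even k → L (X ^ k) ≤ C)
    (k : ℕ) : |L (X ^ k)| ≤ C := by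
  have hadd := hL (1 + X ^ k)
  have hsub := hL (1 - X ^ k)
  rw [show (1 + X ^ k) * (1 + X ^ k) = (X : ℝ[X]) ^ 0 + X ^ k + X ^ k + X ^ (k + k) by ring] at hadd
  rw [show (1 - X ^ k) * (1 - X ^ k) = (X : ℝ[X]) ^ 0 - X ^ k - X ^ k + X ^ (k + k) by ring] at hsub
  simp only [map_add, map_sub] at hadd hsub
  have hzero := heven 0 Even.zero
  have hdouble := heven (k + k) (Even.add_self k)
  exact abs_le.2 ⟨by linarith, by linarith⟩

/-- A bounded convex sequence does not increase at its first step; here the sequence is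
`k ↦ L (q ^ 2 * X ^ (2 * k))`. -/
lemma IsPositive.map_mul_self_mul_one_sub_X_sq_nonneg (hL : IsPositive L)
    (hbdd : ∀ k, |L (X ^ k)| ≤ C) (q : ℝ[X]) : 0 ≤ L (q * q * (1 - X ^ 2)) := by
  obtain ⟨B, hB⟩ := exists_abs_map_mul_X_pow_le hbdd (q * q)
  have hconv : ∀ k, 2 * L (q * q * X ^ (2 * (k + 1))) ≤
      L (q * q * X ^ (2 * k)) + L (q * q * X ^ (2 * (k + 2))) := fun k => by
    have hsq := hL (q * (X ^ k - X ^ (k + 2)))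
    rw [show q * (X ^ k - X ^ (k + 2)) * (q * (X ^ k - X ^ (k + 2))) =
      q * q * X ^ (2 * k) - q * q * X ^ (2 * (k + 1)) - q * q * X ^ (2 * (k + 1)) +
        q * q * X ^ (2 * (k + 2)) by ring] at hsq
    simp only [map_add, map_sub] at hsq
    linarith
  have hle : L (q * q * X ^ (2 * 1)) ≤ L (q * q * X ^ (2 * 0)) :=
    apply_one_le_apply_zero_of_bddAbove (a := fun k => L (q * q * X ^ (2 * k))) hconv
      ⟨B, Set.forall_mem_range.2 fun k => (le_abs_self _).trans (hB _)⟩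
  rw [mul_zero, pow_zero, mul_one, mul_one] at hle
  rw [mul_sub, mul_one, map_sub]
  linarith

lemma IsPositive.map_mul_self_mul_one_sub_X_sq_pow_nonneg (hL : IsPositive L)
    (hbdd : ∀ k, |L (X ^ k)| ≤ C) (q : ℝ[X]) (n : ℕ) : 0 ≤ L (q * q * (1 - X ^ 2) ^ n) := by
  obtain ⟨j, rfl | rfl⟩ := n.even_or_odd'
  · convert hL (q * (1 - X ^ 2) ^ j) using 2
    ring
  · convert hL.map_mul_self_mul_one_sub_X_sq_nonneg hbdd (q * (1 - X ^ 2) ^ j) using 2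
    ring

lemma IsPositive.map_one_sub_X_sq_pow_mul_one_add_nonneg (hL : IsPositive L)
    (hbdd : ∀ k, |L (X ^ k)| ≤ C) {ε : ℝ} (hε : ε ^ 2 = 1) (n : ℕ) :
    0 ≤ L ((1 - X ^ 2) ^ n * (1 + Polynomial.C ε * X)) := by
  have hsq := hL.map_mul_self_mul_one_sub_X_sq_pow_nonneg hbdd (1 + Polynomial.C ε * X) n
  have hone := hL.map_mul_self_mul_one_sub_X_sq_pow_nonneg hbdd 1 (n + 1)
  have hCε : (Polynomial.C ε : ℝ[X]) ^ 2 = 1 := by rw [← C_pow, hε, C_1]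
  -- `2 (1 + ε X) = (1 + ε X) ^ 2 + (1 - X ^ 2)`
  have hsum : (1 + Polynomial.C ε * X) * (1 + Polynomial.C ε * X) * (1 - X ^ 2) ^ n +
      1 * 1 * (1 - X ^ 2) ^ (n + 1) = (1 - X ^ 2) ^ n * (1 + Polynomial.C ε * X) +
        (1 - X ^ 2) ^ n * (1 + Polynomial.C ε * X) := by
    linear_combination X ^ 2 * (1 - X ^ 2) ^ n * hCε
  have hmap := congrArg L hsum
  simp only [map_add] at hmap
  linarith

end PositiveFunctional

/-- `F` preserves Hankel positivity: applied entrywise to moment sequences of measures on `[-1, 1]`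
it yields a sequence with positive Riesz functional. This is the common consequence of both
preservation properties in the theorem. -/
def PreservesHankel {ι : Type*} (F : (ι → ℝ) → ℝ) : Prop :=
  ∀ s : ι → ℕ → ℝ, (∀ l, s l ∈ momentAlgebra) →
    IsPositive (rieszFunctional fun k => F fun l => s l k)

lemma preservesHankel_of_maps_moments {ι : Type*} {F : (ι → ℝ) → ℝ}
    (h : ∀ μ : ι → Measure ℝ, (∀ l, IsAdmissible (μ l)) →
      (∀ l, μ l (Set.Icc (-1 : ℝ) 1)ᶜ = 0) →
      ∃ σ : Measure ℝ, IsAdmissible σ ∧ ∀ k : ℕ, F (fun l => moment (μ l) k) = moment σ k) :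
    PreservesHankel F := by
  intro s hs
  choose μ hμ hμI hμs using fun l => mem_momentAlgebra.1 (hs l)
  obtain ⟨σ, hσ, hFσ⟩ := h μ hμ hμI
  have hmoment : (fun k => F fun l => s l k) = moment σ := by
    funext k
    simp only [← hFσ, hμs]
  rw [hmoment]
  exact isPositive_rieszFunctional_moment hσ

lemma preservesHankel_of_maps_posSemidef {ι : Type*} {F : (ι → ℝ) → ℝ}
    (h : ∀ (N : ℕ) (A : ι → Matrix (Fin N) (Fin N) ℝ), (∀ l, (A l).PosSemidef) →
      (Matrix.of fun i j : Fin N => F fun l => A l i j).PosSemidef) :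
    PreservesHankel F := by
  refine fun s hs => isPositive_rieszFunctional_iff.2 fun N =>
    h N (fun l => Matrix.of fun i j : Fin N => s l (i + j)) fun l => ?_
  obtain ⟨μ, hμ, -, hμs⟩ := mem_momentAlgebra.1 (hs l)
  exact isPositive_rieszFunctional_iff.1 (hμs ▸ isPositive_rieszFunctional_moment hμ) N

namespace PreservesHankel

variable {ι κ : Type*} {F : (ι → ℝ) → ℝ} {s : ι → ℕ → ℝ}

lemma comp_eval (hF : PreservesHankel F) (P : ι → ℝ[X]) (hP : ∀ l n, 0 ≤ (P l).coeff n)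
    (j : ι → κ) : PreservesHankel fun x : κ → ℝ => F fun l => (P l).eval (x (j l)) :=
  fun s hs => hF (fun l k => (P l).eval (s (j l) k)) fun l => eval_mem_momentAlgebra (hP l) (hs _)

lemma monotoneOn (hF : PreservesHankel F) : MonotoneOn F (Set.Ici 0) := by
  intro a ha b _ hab
  have hsq := hF (fun l k => (b l - a l) * 0 ^ k + a l)
    (fun l => add_mem (atom_mem_momentAlgebra (sub_nonneg.2 (hab l)) (by simp))
      (const_mem_momentAlgebra (ha l))) (1 - X)
  rw [show (1 - X) * (1 - X) = (X : ℝ[X]) ^ 0 - X ^ 1 - X ^ 1 + X ^ 2 by ring] at hsq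
  simp only [map_add, map_sub, rieszFunctional_X_pow] at hsq
  norm_num at hsq
  exact hsq

lemma rieszFunctional_nonneg (hF : PreservesHankel F) (hs : ∀ l, s l ∈ momentAlgebra) {ε : ℝ}
    (hε : ε ^ 2 = 1) (n : ℕ) :
    0 ≤ rieszFunctional (fun k => F fun l => s l k) ((1 - X ^ 2) ^ n * (1 + C ε * X)) := by
  refine (hF s hs).map_one_sub_X_sq_pow_mul_one_add_nonneg
    ((hF s hs).abs_map_X_pow_le (C := F fun l => s l 0) fun k hk => ?_) hε n
  rw [rieszFunctional_X_pow]
  have hnonneg : ∀ {j}, Even j → (0 : ι → ℝ) ≤ fun l => s l j := fun hj l =>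
    even_nonneg_of_mem_momentAlgebra (hs l) hj
  exact hF.monotoneOn (hnonneg hk) (hnonneg Even.zero) fun l =>
    le_apply_zero_of_mem_momentAlgebra (hs l) k

lemma abs_one_sub_three_le (hF : PreservesHankel F) (hs : ∀ l, s l ∈ momentAlgebra) :
    |F (fun l => s l 1) - F (fun l => s l 3)| ≤ F (fun l => s l 0) - F (fun l => s l 2) := by
  have hadd := hF.rieszFunctional_nonneg hs (ε := 1) (by norm_num) 1
  have hsub := hF.rieszFunctional_nonneg hs (ε := -1) (by norm_num) 1
  rw [C_1, show (1 - X ^ 2) ^ 1 * (1 + 1 * X) = (X : ℝ[X]) ^ 0 + X ^ 1 - X ^ 2 - X ^ 3 by ring]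
    at hadd
  rw [C_neg, C_1,
    show (1 - X ^ 2) ^ 1 * (1 + -1 * X) = (X : ℝ[X]) ^ 0 - X ^ 1 - X ^ 2 + X ^ 3 by ring] at hsub
  simp only [map_add, map_sub, rieszFunctional_X_pow] at hadd hsub
  exact abs_le.2 ⟨by linarith, by linarith⟩

end PreservesHankel

/-- The sequence comes from atoms at `±1` and `±1/2`; the latter produce the difference
`s 1 - s 3 = x - y`. -/
lemma exists_mem_momentAlgebra_one_three {x y t : ℝ} (h : |x| + 4 * |x - y| ≤ t) :
    ∃ s ∈ momentAlgebra, s 1 = x ∧ s 3 = y ∧ s 0 = t ∧ s 2 = t - 2 * |x - y| := by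
  obtain ⟨hx₁, hx₂⟩ := abs_le.1 (le_refl |x|)
  obtain ⟨hd₁, hd₂⟩ := abs_le.1 (le_refl |x - y|)
  refine ⟨_, add_mem
    (add_mem (atom_mem_momentAlgebra (w := (t - 8 / 3 * |x - y| + (x - 4 / 3 * (x - y))) / 2)
        (u := 1) (by linarith) (by norm_num))
      (atom_mem_momentAlgebra (w := (t - 8 / 3 * |x - y| - (x - 4 / 3 * (x - y))) / 2) (u := -1)
        (by linarith) (by norm_num)))
    (add_mem (atom_mem_momentAlgebra (w := 4 / 3 * (|x - y| + (x - y))) (u := 1 / 2)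
        (by linarith) (by norm_num))
      (atom_mem_momentAlgebra (w := 4 / 3 * (|x - y| - (x - y))) (u := -1 / 2)
        (by linarith) (by norm_num))),
    ?_, ?_, ?_, ?_⟩
  all_goals
    simp only [Pi.add_apply]
    ring

namespace PreservesHankel

variable {ι : Type*} {F : (ι → ℝ) → ℝ}

lemma abs_sub_le_diagonal [Fintype ι] (hF : PreservesHankel F) {x y : ι → ℝ} {t : ℝ}
    (ht : ‖x‖ + 4 * ‖x - y‖ ≤ t) :
    |F x - F y| ≤ F (fun _ => t) - F (fun _ => t - 2 * ‖x - y‖) := by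
  have hx : ∀ l, |x l| ≤ ‖x‖ := norm_le_pi_norm x
  have hxy : ∀ l, |x l - y l| ≤ ‖x - y‖ := norm_le_pi_norm (x - y)
  have hlow : 0 ≤ t - 2 * ‖x - y‖ := by linarith [norm_nonneg x, norm_nonneg (x - y)]
  choose s hs hs₁ hs₃ hs₀ hs₂ using fun l => exists_mem_momentAlgebra_one_three (x := x l)
    (y := y l) (t := t) (by linarith [hx l, hxy l])
  have hdiff := hF.abs_one_sub_three_le hs
  simp only [hs₁, hs₃, hs₀, hs₂] at hdiff
  have hmono : F (fun _ => t - 2 * ‖x - y‖) ≤ F (fun l => t - 2 * |x l - y l|) :=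
    hF.monotoneOn (fun _ => hlow) (fun l => hlow.trans (by linarith [hxy l]))
      fun l => by linarith [hxy l]
  linarith

/-- The oscillation of `F` is controlled by that of the monotone function `t ↦ F (t, …, t)`, which
has arbitrarily large continuity points. -/
lemma continuous [Finite ι] (hF : PreservesHankel F) : Continuous F := by
  have := Fintype.ofFinite ι
  refine continuous_iff_continuousAt.2 fun x => ?_
  have hmono : Monotone fun t : ℝ => F fun _ => max t 0 := fun a b hab =>
    hF.monotoneOn (fun _ => le_max_right _ _) (fun _ => le_max_right _ _)
      fun _ => max_le_max_right _ hab
  obtain ⟨t, htc, ht⟩ : ∃ t, ContinuousAt (fun t : ℝ => F fun _ => max t 0) t ∧ ‖x‖ + 4 < t := by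
    obtain ⟨t, htc, ht⟩ := (hmono.countable_not_continuousAt.dense_compl ℝ).exists_mem_open
      (isOpen_Ioi (a := ‖x‖ + 4)) ⟨‖x‖ + 5, by simp; norm_num⟩
    exact ⟨t, not_not.1 htc, ht⟩
  have hbound : ∀ᶠ y in 𝓝 x, ‖F y - F x‖ ≤
      F (fun _ => max t 0) - F (fun _ => max (t - 2 * ‖x - y‖) 0) := by
    filter_upwards [Metric.ball_mem_nhds x one_pos] with y hy
    rw [Metric.mem_ball, dist_comm, dist_eq_norm] at hy
    have hnorm := norm_nonneg x
    rw [max_eq_left (by linarith), max_eq_left (by linarith), Real.norm_eq_abs, abs_sub_comm]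
    exact hF.abs_sub_le_diagonal (by linarith)
  have hshift : Tendsto (fun y => t - 2 * ‖x - y‖) (𝓝 x) (𝓝 t) := by
    have hcont : Continuous fun y => t - 2 * ‖x - y‖ := by fun_prop
    simpa using hcont.tendsto x
  refine tendsto_iff_norm_sub_tendsto_zero.2
    (squeeze_zero' (.of_forall fun _ => norm_nonneg _) hbound ?_)
  simpa using (tendsto_const_nhds (x := F fun _ => max t 0)).sub (htc.tendsto.comp hshift)

end PreservesHankel

section PowerSeries

variable {f : ℝ → ℝ} {a b : ℕ → ℝ}

lemma analyticAt_tsum_mul_pow {r x : ℝ} (ha : Summable fun n => a n * r ^ n) (hx : |x| < r) :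
    AnalyticAt ℝ (fun x => ∑' n, a n * x ^ n) x := by
  have hr : 0 ≤ r := (abs_nonneg x).trans hx.le
  let p := FormalMultilinearSeries.ofScalars ℝ a
  have hsum : p.sum = fun x => ∑' n, a n * x ^ n := by
    funext y
    simp [FormalMultilinearSeries.sum, p, FormalMultilinearSeries.ofScalars, smul_eq_mul]
  have hradius : (r.toNNReal : ENNReal) ≤ p.radius := by
    refine p.le_radius_of_summable (ha.abs.congr fun n => ?_)
    simp [p, abs_mul, abs_of_nonneg hr, hr]
  have hx' : ‖x‖ₑ < r.toNNReal := by
    rw [← ofReal_norm]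
    exact (ENNReal.ofReal_lt_ofReal_iff ((abs_nonneg x).trans_lt hx)).2 hx
  rw [← hsum]
  refine (p.hasFPowerSeriesOnBall (pos_of_gt (hx'.trans_le hradius))).analyticAt_of_mem ?_
  rw [Metric.mem_eball, edist_zero_right]
  exact hx'.trans_le hradius

lemma hasSum_shift_div_pow {y A : ℝ} (hy : y ≠ 0) (h : HasSum (fun i => a i * y ^ i) A) (n : ℕ) :
    HasSum (fun i => a (i + n) * y ^ i) ((A - ∑ i ∈ Finset.range n, a i * y ^ i) / y ^ n) :=
  (((hasSum_nat_add_iff' n).2 h).div_const (y ^ n)).congr_fun fun i => by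
    rw [pow_add, ← mul_assoc, mul_div_cancel_right₀ _ (pow_ne_zero n hy)]

lemma tendsto_sub_sum_div_pow (hf : ∀ᶠ y in 𝓝[>] 0, HasSum (fun i => a i * y ^ i) (f y)) (n : ℕ) :
    Tendsto (fun y => (f y - ∑ i ∈ Finset.range n, a i * y ^ i) / y ^ n) (𝓝[>] 0) (𝓝 (a n)) := by
  obtain ⟨r, hr, hsum⟩ := (hf.and self_mem_nhdsWithin).exists.imp fun r h => h.symm
  have hlim : Tendsto (fun y => ∑' i, a (i + n) * y ^ i) (𝓝[>] 0)
      (𝓝 (∑' i, a (i + n) * 0 ^ i)) := by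
    refine tendsto_tsum_of_dominated_convergence
      (hasSum_shift_div_pow hr.ne' hsum n).summable.abs (fun i => ?_) ?_
    · exact ((continuous_const.mul (continuous_pow i)).tendsto 0).mono_left nhdsWithin_le_nhds
    · filter_upwards [Ioo_mem_nhdsGT hr] with y hy i
      rw [norm_mul, norm_pow, abs_mul, abs_pow, Real.norm_eq_abs, Real.norm_eq_abs,
        abs_of_pos hy.1, abs_of_pos hr]
      gcongr
      exacts [hy.1.le, hy.2.le]
  rw [tsum_eq_single 0 fun i hi => by rw [zero_pow hi, mul_zero], pow_zero, mul_one,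
    zero_add] at hlim
  refine hlim.congr' ?_
  filter_upwards [hf, self_mem_nhdsWithin] with y hy hy₀
  exact (hasSum_shift_div_pow (ne_of_gt hy₀) hy n).tsum_eq

lemma tendsto_div_pow_of_hasSum (hf : ∀ᶠ y in 𝓝[>] 0, HasSum (fun i => a i * y ^ i) (f y)) {n : ℕ}
    (ha : ∀ i < n, a i = 0) : Tendsto (fun y => f y / y ^ n) (𝓝[>] 0) (𝓝 (a n)) := by
  refine (tendsto_sub_sum_div_pow hf n).congr fun y => ?_
  rw [Finset.sum_eq_zero fun i hi => by rw [ha i (Finset.mem_range.1 hi), zero_mul], sub_zero]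

lemma coeff_eq_zero_of_isBigO (hf : ∀ᶠ y in 𝓝[>] 0, HasSum (fun i => a i * y ^ i) (f y)) {n : ℕ}
    (hO : f =O[𝓝[>] 0] fun y => y ^ n) {i : ℕ} (hi : i < n) : a i = 0 := by
  induction i using Nat.strong_induction_on with
  | _ i ih =>
    refine tendsto_nhds_unique (tendsto_div_pow_of_hasSum hf fun j hj => ih j hj (hj.trans hi)) ?_
    have hlt : (fun y : ℝ => y ^ n) =o[𝓝[>] 0] fun y => y ^ i :=
      (Asymptotics.isLittleO_pow_pow hi).mono nhdsWithin_le_nhds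
    exact (hO.trans_isLittleO hlt).tendsto_div_nhds_zero

lemma coeff_unique (ha : ∀ᶠ y in 𝓝[>] 0, HasSum (fun i => a i * y ^ i) (f y))
    (hb : ∀ᶠ y in 𝓝[>] 0, HasSum (fun i => b i * y ^ i) (f y)) : a = b := by
  funext i
  have hsub : ∀ᶠ y in 𝓝[>] (0 : ℝ), HasSum (fun i => (a i - b i) * y ^ i) 0 := by
    filter_upwards [ha, hb] with y hay hby
    simpa only [sub_mul, sub_self] using hay.sub hby
  exact sub_eq_zero.1
    (coeff_eq_zero_of_isBigO hsub (Asymptotics.isBigO_zero _ _) i.lt_succ_self)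

end PowerSeries

lemma hasSum_of_dominated {α β : Type*} {l : Filter α} [l.NeBot] {f : α → β → ℝ}
    {g bound : β → ℝ} {s : α → ℝ} {t : ℝ} (hbound : Summable bound)
    (hfg : ∀ n, Tendsto (f · n) l (𝓝 (g n))) (hdom : ∀ᶠ k in l, ∀ n, ‖f k n‖ ≤ bound n)
    (hs : ∀ᶠ k in l, HasSum (f k) (s k)) (ht : Tendsto s l (𝓝 t)) : HasSum g t := by
  have hsummable : Summable g := .of_norm_bounded hbound fun n =>
    le_of_tendsto (hfg n).norm (hdom.mono fun k hk => hk n)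
  have hlim := tendsto_tsum_of_dominated_convergence hbound hfg hdom
  rw [← tendsto_nhds_unique (hlim.congr' (hs.mono fun k hk => hk.tsum_eq)) ht]
  exact hsummable.hasSum

lemma exists_tendsto_ultrafilter {α : Type*} (U : Ultrafilter α) {c : α → ℝ} {B : ℝ}
    (hc : ∀ᶠ k in (U : Filter α), c k ∈ Set.Icc 0 B) : ∃ a, 0 ≤ a ∧ Tendsto c U (𝓝 a) := by
  obtain ⟨a, ha, hlim⟩ := isCompact_Icc.ultrafilter_le_nhds (U.map c) (le_principal_iff.2 hc)
  exact ⟨a, ha.1, hlim⟩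

/-- On `S`, the function `f` is the sum of a power series with non-negative coefficients. -/
def HasNonnegSeriesOn (f : ℝ → ℝ) (S : Set ℝ) : Prop :=
  ∃ c : ℕ → ℝ, (∀ n, 0 ≤ c n) ∧ ∀ y ∈ S, HasSum (fun n => c n * y ^ n) (f y)

lemma hasSum_coeff_mul_pow (P : ℝ[X]) (y : ℝ) : HasSum (fun n => P.coeff n * y ^ n) (P.eval y) := by
  rw [eval_eq_sum_range]
  refine hasSum_sum_of_ne_finset_zero fun n hn => ?_
  rw [coeff_eq_zero_of_natDegree_lt (by simpa [Nat.lt_succ_iff] using hn), zero_mul]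

namespace HasNonnegSeriesOn

variable {f g : ℝ → ℝ} {S : Set ℝ}

lemma congr (hf : HasNonnegSeriesOn f S) (h : Set.EqOn f g S) : HasNonnegSeriesOn g S := by
  obtain ⟨c, hc, hsum⟩ := hf
  exact ⟨c, hc, fun y hy => h hy ▸ hsum y hy⟩

/-- Compactness of the coefficients gives a limit series along an ultrafilter; it sums to `u` by
dominated convergence, comparing with a geometric series at a larger point of `S`. -/
lemma of_tendsto {α : Type*} {l : Filter α} [l.NeBot] {f : α → ℝ → ℝ} {u : ℝ → ℝ}
    (hS : ∀ y ∈ S, 0 ≤ y ∧ ∃ z ∈ S, y < z) (hf : ∀ᶠ k in l, HasNonnegSeriesOn (f k) S)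
    (hlim : ∀ y ∈ S, Tendsto (fun k => f k y) l (𝓝 (u y))) : HasNonnegSeriesOn u S := by
  obtain rfl | ⟨x, hx⟩ := S.eq_empty_or_nonempty
  · exact ⟨0, fun _ => le_rfl, by simp⟩
  obtain ⟨c, hc⟩ := hf.choice
  let U := Ultrafilter.of l
  have hU : (U : Filter α) ≤ l := Ultrafilter.of_le l
  have hbound : ∀ z ∈ S, ∀ᶠ k in (U : Filter α), ∀ n, 0 ≤ c k n ∧ c k n * z ^ n ≤ u z + 1 := by
    intro z hz
    filter_upwards [hU hc, hU ((hlim z hz).eventually_le_const (lt_add_one (u z)))] with k hk hkz n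
    have hterm := fun i => mul_nonneg (hk.1 i) (pow_nonneg (hS z hz).1 i)
    exact ⟨hk.1 n, (le_hasSum (hk.2 z hz) n fun i _ => hterm i).trans hkz⟩
  have hcoeff : ∀ n, ∃ a, 0 ≤ a ∧ Tendsto (fun k => c k n) U (𝓝 a) := fun n => by
    obtain ⟨hx0, z, hz, hxz⟩ := hS x hx
    have hzn : 0 < z ^ n := pow_pos (hx0.trans_lt hxz) n
    refine exists_tendsto_ultrafilter U (B := (u z + 1) / z ^ n) ?_
    filter_upwards [hbound z hz] with k hk
    exact ⟨(hk n).1, (le_div_iff₀ hzn).2 (hk n).2⟩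
  choose a ha hlima using hcoeff
  refine ⟨a, ha, fun y hy => ?_⟩
  obtain ⟨hy0, z, hz, hyz⟩ := hS y hy
  have hz0 : 0 < z := hy0.trans_lt hyz
  have hgeom : Summable fun n => (u z + 1) * (y / z) ^ n :=
    (summable_geometric_of_lt_one (by positivity) ((div_lt_one hz0).2 hyz)).mul_left _
  have hdom : ∀ᶠ k in (U : Filter α), ∀ n, ‖c k n * y ^ n‖ ≤ (u z + 1) * (y / z) ^ n := by
    filter_upwards [hbound z hz] with k hk n
    rw [Real.norm_of_nonneg (mul_nonneg (hk n).1 (by positivity))]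
    calc c k n * y ^ n = c k n * z ^ n * (y / z) ^ n := by
          rw [mul_assoc, ← mul_pow, mul_div_cancel₀ y hz0.ne']
      _ ≤ (u z + 1) * (y / z) ^ n := by gcongr; exact (hk n).2
  refine hasSum_of_dominated hgeom (fun n => (hlima n).mul_const _) hdom ?_
    ((hlim y hy).mono_left hU)
  filter_upwards [hU hc] with k hk using hk.2 y hy

lemma coeff_eq_zero_of_le_pow {c : ℕ → ℝ} (hc : ∀ n, 0 ≤ c n)
    (hsum : ∀ y > 0, HasSum (fun n => c n * y ^ n) (f y)) {C : ℝ} {d : ℕ}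
    (hle : ∀ y ≥ 1, f y ≤ C * y ^ d) {n : ℕ} (hn : d < n) : c n = 0 := by
  by_contra hne
  have hpos : 0 < c n := (hc n).lt_of_ne' hne
  obtain ⟨y, hy⟩ := exists_gt (max 1 (C / c n))
  obtain ⟨hy1, hyC⟩ := max_lt_iff.1 hy
  rw [div_lt_iff₀' hpos] at hyC
  have hy0 : 0 < y := one_pos.trans hy1
  have hterm : c n * y ^ n ≤ f y :=
    le_hasSum (hsum y hy0) n fun i _ => mul_nonneg (hc i) (by positivity)
  have hchain : c n * y * y ^ d ≤ C * y ^ d :=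
    calc c n * y * y ^ d = c n * y ^ (d + 1) := by ring
      _ ≤ c n * y ^ n := by gcongr; exacts [hy1.le, hn]
      _ ≤ C * y ^ d := hterm.trans (hle y hy1.le)
  exact hyC.not_ge (le_of_mul_le_mul_right hchain (by positivity))

lemma exists_polynomial_of_le_pow (hf : HasNonnegSeriesOn f (Set.Ioi 0)) {C : ℝ} {d : ℕ}
    (hle : ∀ y ≥ 1, f y ≤ C * y ^ d) :
    ∃ Q : ℝ[X], (∀ n, 0 ≤ Q.coeff n) ∧ Q.natDegree ≤ d ∧ ∀ y > 0, f y = Q.eval y := by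
  obtain ⟨c, hc, hsum⟩ := hf
  refine ⟨∑ n ∈ Finset.range (d + 1), monomial n (c n), fun n => ?_, ?_, fun y hy => ?_⟩
  · rw [finsetSum_coeff]
    refine Finset.sum_nonneg fun i _ => ?_
    rw [coeff_monomial]
    split_ifs
    exacts [hc i, le_rfl]
  · exact natDegree_sum_le_of_forall_le _ _ fun n hn =>
      (natDegree_monomial_le _).trans (Nat.lt_succ_iff.1 (Finset.mem_range.1 hn))
  · rw [eval_finsetSum]
    simp only [eval_monomial]
    refine (hsum y hy).unique (hasSum_sum_of_ne_finset_zero fun n hn => ?_)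
    rw [coeff_eq_zero_of_le_pow hc hsum hle (by simpa [Nat.lt_succ_iff] using hn), zero_mul]

end HasNonnegSeriesOn

section Bernstein

lemma rieszFunctional_X_sub_one_pow (f : ℝ → ℝ) (h y : ℝ) (n : ℕ) :
    rieszFunctional (fun k => f (y + k * h)) ((X - 1) ^ n) = (fwdDiff h)^[n] f y := by
  rw [fwdDiff_iter_eq_sum_shift, sub_eq_add_neg, add_pow, map_sum]
  refine Finset.sum_congr rfl fun k _ => ?_
  rw [show (X : ℝ[X]) ^ k * (-1) ^ (n - k) * (n.choose k : ℝ[X]) =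
    ((-1 : ℤ) ^ (n - k) * n.choose k) • X ^ k by rw [zsmul_eq_mul]; push_cast; ring,
    map_zsmul, rieszFunctional_X_pow, nsmul_eq_mul]

/-- Both sides are the value of the Riesz functional of `k ↦ f (k * h)` at
`(x * X + (1 - x)) ^ n = (1 + x * (X - 1)) ^ n`. -/
lemma sum_bernstein_eq_sum_fwdDiff (f : ℝ → ℝ) (h x : ℝ) (n : ℕ) :
    ∑ k ∈ Finset.range (n + 1), (n.choose k * x ^ k * (1 - x) ^ (n - k)) * f (k * h) =
      ∑ k ∈ Finset.range (n + 1), (n.choose k * (fwdDiff h)^[k] f 0) * x ^ k := by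
  let L := rieszFunctional fun k => f (0 + k * h)
  have hbern : L ((C x * X + C (1 - x)) ^ n) =
      ∑ k ∈ Finset.range (n + 1), (n.choose k * x ^ k * (1 - x) ^ (n - k)) * f (k * h) := by
    rw [add_pow, map_sum]
    refine Finset.sum_congr rfl fun k _ => ?_
    rw [show (C x * X) ^ k * C (1 - x) ^ (n - k) * (n.choose k : ℝ[X]) =
      (n.choose k * x ^ k * (1 - x) ^ (n - k)) • X ^ k by
        rw [smul_eq_C_mul]; simp only [C_mul, C_pow, C_eq_natCast]; ring,
      map_smul, rieszFunctional_X_pow, zero_add, smul_eq_mul]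
  have hdiff : L ((C x * (X - 1) + 1) ^ n) =
      ∑ k ∈ Finset.range (n + 1), (n.choose k * (fwdDiff h)^[k] f 0) * x ^ k := by
    rw [add_pow, map_sum]
    refine Finset.sum_congr rfl fun k _ => ?_
    rw [show (C x * (X - 1)) ^ k * 1 ^ (n - k) * (n.choose k : ℝ[X]) =
      (n.choose k * x ^ k : ℝ) • (X - 1) ^ k by
        rw [smul_eq_C_mul, mul_pow, one_pow]; simp only [C_mul, C_pow, C_eq_natCast]; ring,
      map_smul, rieszFunctional_X_sub_one_pow, smul_eq_mul, mul_right_comm]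
  rw [← hbern, ← hdiff, C_sub, C_1]
  congr 2
  ring

/-- The Bernstein polynomials of `u` have non-negative coefficients and converge to `u`. -/
lemma hasNonnegSeriesOn_of_fwdDiff_nonneg {u : ℝ → ℝ} (hu : ContinuousOn u (Set.Icc 0 1))
    (hdiff : ∀ k : ℕ, 1 ≤ k → ∀ n, 0 ≤ (fwdDiff (1 / (k : ℝ)))^[n] u 0) :
    HasNonnegSeriesOn u (Set.Ico 0 1) := by
  let v : C(unitInterval, ℝ) :=
    ⟨fun x => u x, hu.comp_continuous continuous_subtype_val Subtype.prop⟩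
  let Q : ℕ → ℝ[X] := fun k => ∑ n ∈ Finset.range (k + 1),
    monomial n (k.choose n * (fwdDiff (1 / (k : ℝ)))^[n] u 0)
  have hQ : ∀ (k : ℕ) (x : unitInterval), bernsteinApproximation k v x = (Q k).eval (x : ℝ) := by
    intro k x
    simp only [Q, eval_finsetSum, eval_monomial]
    rw [bernsteinApproximation.apply, ← sum_bernstein_eq_sum_fwdDiff, Finset.sum_range]
    refine Finset.sum_congr rfl fun i _ => ?_
    rw [bernstein_apply, smul_eq_mul]
    simp [v, bernstein.z, div_eq_mul_inv]
  refine .of_tendsto (l := atTop) (f := fun k => (Q k).eval) (fun y hy => ⟨hy.1, ?_⟩) ?_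
    fun y hy => ?_
  · obtain ⟨z, hyz, hz⟩ := exists_between hy.2
    exact ⟨z, ⟨hy.1.trans hyz.le, hz⟩, hyz⟩
  · filter_upwards [eventually_ge_atTop 1] with k hk
    refine ⟨(Q k).coeff, fun n => ?_, fun y _ => hasSum_coeff_mul_pow _ y⟩
    simp only [Q, finsetSum_coeff, coeff_monomial]
    refine Finset.sum_nonneg fun i _ => ?_
    split_ifs
    exacts [mul_nonneg (Nat.cast_nonneg _) (hdiff k hk i), le_rfl]
  · have hy' : y ∈ unitInterval := ⟨hy.1, hy.2.le⟩
    have hlim := ((ContinuousEvalConst.continuous_eval_const (F := C(unitInterval, ℝ))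
      (⟨y, hy'⟩ : unitInterval)).tendsto v).comp (bernsteinApproximation_uniform v)
    simp only [Function.comp_def, hQ] at hlim
    exact hlim

end Bernstein

section OneVariable

lemma rieszFunctional_one_sub_X_sq_pow_mul_one_add (s : ℕ → ℝ) (n : ℕ) (ε : ℝ) :
    rieszFunctional s ((1 - X ^ 2) ^ n * (1 + C ε * X)) =
      ∑ i ∈ Finset.range (n + 1), (-1) ^ i * n.choose i * (s (2 * i) + ε * s (2 * i + 1)) := by
  rw [sub_eq_neg_add, add_pow, Finset.sum_mul, map_sum]
  refine Finset.sum_congr rfl fun i _ => ?_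
  rw [show (-X ^ 2) ^ i * 1 ^ (n - i) * (n.choose i : ℝ[X]) * (1 + C ε * X) =
    ((-1) ^ i * n.choose i : ℝ) • (X ^ (2 * i) + ε • X ^ (2 * i + 1)) by
      rw [smul_eq_C_mul, smul_eq_C_mul, neg_pow, one_pow]
      simp only [C_mul, C_pow, C_neg, C_1, C_eq_natCast]
      ring,
    map_smul, map_add, map_smul, rieszFunctional_X_pow, rieszFunctional_X_pow, smul_eq_mul,
    smul_eq_mul]

lemma exists_mem_momentAlgebra_even_odd {a B r : ℝ} (hB : 0 ≤ B) (hr : r ∈ Set.Icc (1 / 2) 1) :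
    ∃ s ∈ momentAlgebra, ∀ i, s (2 * i) = |a| + 2 * (B * (r ^ 2) ^ i) ∧
      s (2 * i + 1) = a + B * (r ^ 2) ^ i := by
  obtain ⟨hr₁, hr₂⟩ := hr
  have hr₀ : 0 < r := by linarith
  have hBr : B / r ≤ 2 * B := by
    rw [div_le_iff₀ hr₀]
    nlinarith
  have hBr₀ : 0 ≤ B / r := div_nonneg hB hr₀.le
  obtain ⟨ha₁, ha₂⟩ := abs_le.1 (le_refl |a|)
  refine ⟨_, add_mem
    (add_mem (atom_mem_momentAlgebra (w := (|a| + a) / 2) (u := 1) (by linarith) (by norm_num))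
      (atom_mem_momentAlgebra (w := (|a| - a) / 2) (u := -1) (by linarith) (by norm_num)))
    (add_mem (atom_mem_momentAlgebra (w := (2 * B + B / r) / 2) (u := r)
        (by linarith) ⟨by linarith, hr₂⟩)
      (atom_mem_momentAlgebra (w := (2 * B - B / r) / 2) (u := -r)
        (by linarith) ⟨by linarith, by linarith⟩)),
    fun i => ⟨?_, ?_⟩⟩
  all_goals
    simp only [Pi.add_apply, pow_succ _ (2 * i), pow_mul, one_pow, neg_sq]
    field_simp
    ring

lemma exp_neg_inv_two_mul_mem_Icc {k : ℕ} (hk : 1 ≤ k) :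
    Real.exp (-(2 * k : ℝ)⁻¹) ∈ Set.Icc (1 / 2) 1 := by
  have hk₁ : (1 : ℝ) ≤ k := by exact_mod_cast hk
  have hinv : (2 * k : ℝ)⁻¹ ≤ 2⁻¹ := by
    gcongr
    linarith
  constructor
  · linarith [Real.add_one_le_exp (-(2 * k : ℝ)⁻¹)]
  · rw [Real.exp_le_one_iff, neg_nonpos]
    positivity

variable {f : ℝ → ℝ}

lemma fwdDiff_nonneg_of_preservesHankel (hf : PreservesHankel fun x : Unit → ℝ => f (x ()))
    (a : ℝ) {ε : ℝ} (hε : ε ^ 2 = 1) {k : ℕ} (hk : 1 ≤ k) (n : ℕ) :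
    0 ≤ (fwdDiff (1 / (k : ℝ)))^[n]
      (fun x => f (|a| + 2 * Real.exp (x - 1 / 2)) + ε * f (a + Real.exp (x - 1 / 2))) 0 := by
  have hk₀ : (k : ℝ) ≠ 0 := by exact_mod_cast (Nat.one_le_iff_ne_zero.1 hk)
  obtain ⟨s, hs, hsi⟩ := exists_mem_momentAlgebra_even_odd (a := a)
    (Real.exp_pos (n / k - 1 / 2)).le (exp_neg_inv_two_mul_mem_Icc hk)
  have hriesz := hf.rieszFunctional_nonneg (s := fun _ => s) (fun _ => hs) hε n
  rw [rieszFunctional_one_sub_X_sq_pow_mul_one_add, ← Finset.sum_range_reflect] at hriesz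
  rw [fwdDiff_iter_eq_sum_shift]
  refine hriesz.trans_eq (Finset.sum_congr rfl fun i hi => ?_)
  have hi' : i ≤ n := Nat.lt_succ_iff.1 (Finset.mem_range.1 hi)
  have hexp : Real.exp (n / k - 1 / 2) * (Real.exp (-(2 * k : ℝ)⁻¹) ^ 2) ^ (n - i) =
      Real.exp (0 + i • (1 / (k : ℝ)) - 1 / 2) := by
    rw [← pow_mul, ← Real.exp_nat_mul, ← Real.exp_add, nsmul_eq_mul]
    congr 1
    push_cast [Nat.cast_sub hi']
    field_simp
    ring
  rw [Nat.add_sub_cancel, Nat.choose_symm hi', (hsi _).1, (hsi _).2, hexp, zsmul_eq_mul]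
  push_cast
  rfl

lemma analyticAt_of_preservesHankel (hf : PreservesHankel fun x : Unit → ℝ => f (x ())) (x : ℝ) :
    AnalyticAt ℝ f x := by
  have hcont : Continuous f := hf.continuous.comp (continuous_pi fun _ : Unit => continuous_id)
  have hseries : ∀ {ε : ℝ}, ε ^ 2 = 1 → HasNonnegSeriesOn (fun y =>
      f (|x - 1| + 2 * Real.exp (y - 1 / 2)) + ε * f (x - 1 + Real.exp (y - 1 / 2)))
      (Set.Ico 0 1) := fun hε =>
    hasNonnegSeriesOn_of_fwdDiff_nonneg (Continuous.continuousOn (by fun_prop)) fun k hk n =>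
      fwdDiff_nonneg_of_preservesHankel hf _ hε hk n
  obtain ⟨c, -, hc⟩ := hseries (ε := 1) (by norm_num)
  obtain ⟨d, -, hd⟩ := hseries (ε := -1) (by norm_num)
  have hexp : ∀ y ∈ Set.Ico (0 : ℝ) 1,
      HasSum (fun n => (c n - d n) / 2 * y ^ n) (f (x - 1 + Real.exp (y - 1 / 2))) := by
    intro y hy
    rw [show f (x - 1 + Real.exp (y - 1 / 2)) =
      (f (|x - 1| + 2 * Real.exp (y - 1 / 2)) + 1 * f (x - 1 + Real.exp (y - 1 / 2)) -
        (f (|x - 1| + 2 * Real.exp (y - 1 / 2)) + -1 * f (x - 1 + Real.exp (y - 1 / 2)))) / 2 by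
          ring]
    exact (((hc y hy).sub (hd y hy)).div_const 2).congr_fun fun n => by ring
  let v : ℝ → ℝ := fun y => 1 / 2 + Real.log (1 + y - x)
  have hv : v x = 1 / 2 := by simp [v]
  have hanalytic : AnalyticAt ℝ v x :=
    analyticAt_const.add (AnalyticAt.log (by fun_prop) (by norm_num))
  have hcomp : AnalyticAt ℝ (fun y => ∑' n, (c n - d n) / 2 * v y ^ n) x := by
    refine AnalyticAt.fun_comp (g := fun z => ∑' n, (c n - d n) / 2 * z ^ n) ?_ hanalytic
    refine analyticAt_tsum_mul_pow (hexp (3 / 4) (by norm_num)).summable ?_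
    rw [hv, abs_of_pos] <;> norm_num
  refine hcomp.congr ?_
  have hnear : ∀ᶠ y in 𝓝 x, v y ∈ Set.Ioo 0 1 :=
    hanalytic.continuousAt (Ioo_mem_nhds (by rw [hv]; norm_num) (by rw [hv]; norm_num))
  filter_upwards [hnear, Ioi_mem_nhds (sub_one_lt x)] with y hy hyx
  rw [(hexp (v y) ⟨hy.1.le, hy.2⟩).tsum_eq]
  congr 1
  rw [Set.mem_Ioi] at hyx
  rw [show v y - 1 / 2 = Real.log (1 + y - x) by simp [v], Real.exp_log (by linarith)]
  ring

lemma hasSum_taylor_of_analyticAt {a : ℝ} (hf : AnalyticAt ℝ f a) :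
    ∀ᶠ y in 𝓝 0, HasSum (fun n => iteratedDeriv n f a / n.factorial * y ^ n) (f (a + y)) := by
  have h := hasFPowerSeriesAt_iff.1 hf.hasFPowerSeriesAt
  simp only [FormalMultilinearSeries.coeff_ofScalars, smul_eq_mul] at h
  exact h.mono fun y hy => by simpa only [mul_comm] using hy

lemma hasSum_rieszFunctional_geometric {p : ℕ → ℝ} {b : ℝ} (q : ℝ) (P : ℝ[X])
    (h : ∀ k, HasSum (fun n => p n * (b * q ^ k) ^ n) (f (b * q ^ k))) :
    HasSum (fun n => p n * P.eval (q ^ n) * b ^ n)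
      (rieszFunctional (fun k => f (b * q ^ k)) P) := by
  induction P using Polynomial.induction_on' with
  | add P Q hP hQ =>
    rw [map_add]
    refine (hP.add hQ).congr_fun fun n => ?_
    rw [eval_add]
    ring
  | monomial k c =>
    rw [rieszFunctional_monomial]
    refine ((h k).mul_right c).congr_fun fun n => ?_
    rw [eval_monomial, mul_pow, ← pow_mul, ← pow_mul, mul_comm n k]
    ring

/-- The Riesz functional of `k ↦ f (a + b / 2 ^ k)` at the square of a polynomial vanishing at
`1, 1/2, …, 1/2 ^ (n - 1)` is, to leading order in `b`, a positive multiple of the `n`-th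
derivative. -/
lemma iteratedDeriv_nonneg_of_preservesHankel
    (hf : PreservesHankel fun x : Unit → ℝ => f (x ())) (n : ℕ) {a : ℝ} (ha : 0 ≤ a) :
    0 ≤ iteratedDeriv n f a := by
  let q : ℝ[X] := ∏ i ∈ Finset.range n, (X - C ((1 / 2) ^ i))
  have hq : ∀ i < n, q.eval ((1 / 2) ^ i) = 0 := fun i hi => by
    rw [eval_prod]
    exact Finset.prod_eq_zero (Finset.mem_range.2 hi) (by simp)
  have hqn : q.eval ((1 / 2) ^ n) ≠ 0 := by
    rw [eval_prod]
    refine Finset.prod_ne_zero_iff.2 fun i hi => ?_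
    rw [eval_sub, eval_X, eval_C, sub_ne_zero]
    exact (pow_lt_pow_right_of_lt_one₀ (by norm_num) (by norm_num) (Finset.mem_range.1 hi)).ne
  let g : ℝ → ℝ := fun b => rieszFunctional (fun k => f (a + b * (1 / 2) ^ k)) (q * q)
  have hsum : ∀ᶠ b in 𝓝[>] 0, HasSum (fun i => iteratedDeriv i f a / i.factorial *
      (q * q).eval ((1 / 2) ^ i) * b ^ i) (g b) := by
    obtain ⟨δ, hδ, htaylor⟩ := Metric.eventually_nhds_iff.1
      (hasSum_taylor_of_analyticAt (analyticAt_of_preservesHankel hf a))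
    filter_upwards [Ioo_mem_nhdsGT hδ] with b hb
    refine hasSum_rieszFunctional_geometric (f := fun y => f (a + y)) _ _ fun k => htaylor ?_
    rw [dist_zero_right, Real.norm_of_nonneg (mul_nonneg hb.1.le (by positivity))]
    exact (mul_le_of_le_one_right hb.1.le (pow_le_one₀ (by norm_num) (by norm_num))).trans_lt hb.2
  have hlim := tendsto_div_pow_of_hasSum hsum (n := n) fun i hi => by
    rw [eval_mul, hq i hi, mul_zero, mul_zero]
  have hnonneg := ge_of_tendsto hlim (b := 0) <| by
    filter_upwards [self_mem_nhdsWithin] with b hb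
    refine div_nonneg (hf (fun _ k => a + b * (1 / 2) ^ k) (fun _ => ?_) q) (pow_nonneg hb.le n)
    exact add_mem (const_mem_momentAlgebra ha) (atom_mem_momentAlgebra hb.le (by norm_num))
  rw [eval_mul] at hnonneg
  have hdiv := nonneg_of_mul_nonneg_left hnonneg (mul_self_pos.2 hqn)
  rwa [le_div_iff₀ (by positivity), zero_mul] at hdiv

lemma sum_taylor_le (hf : AnalyticOnNhd ℝ f Set.univ)
    (hderiv : ∀ n, ∀ a ≥ 0, 0 ≤ iteratedDeriv n f a) (n : ℕ) {y : ℝ} (hy : 0 ≤ y) :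
    ∑ i ∈ Finset.range n, iteratedDeriv i f 0 / i.factorial * y ^ i ≤ f y := by
  obtain _ | n := n
  · simpa using hderiv 0 y hy
  obtain rfl | hy := hy.eq_or_lt
  · simp [Finset.sum_range_succ']
  have hcd : ∀ {k : ℕ} {x : ℝ}, ContDiffAt ℝ k f x := (hf _ trivial).contDiffAt
  obtain ⟨z, hz, heq⟩ := taylor_mean_remainder_lagrange_iteratedDeriv hy.ne (n := n)
    fun x _ => hcd.contDiffWithinAt
  have htaylor : taylorWithinEval f n (Set.uIcc 0 y) 0 y =
      ∑ i ∈ Finset.range (n + 1), iteratedDeriv i f 0 / i.factorial * y ^ i := by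
    rw [taylor_within_apply]
    refine Finset.sum_congr rfl fun i _ => ?_
    rw [iteratedDerivWithin_eq_iteratedDeriv (uniqueDiffOn_uIcc hy.ne) hcd Set.left_mem_uIcc,
      sub_zero, smul_eq_mul]
    ring
  rw [Set.uIoo_of_lt hy] at hz
  rw [← htaylor, ← sub_nonneg, heq, sub_zero]
  have := hderiv (n + 1) z hz.1.le
  positivity

theorem hasNonnegSeriesOn_of_preservesHankel
    (hf : PreservesHankel fun x : Unit → ℝ => f (x ())) : HasNonnegSeriesOn f Set.univ := by
  have hanalytic : AnalyticOnNhd ℝ f Set.univ := fun x _ => analyticAt_of_preservesHankel hf x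
  let c : ℕ → ℝ := fun n => iteratedDeriv n f 0 / n.factorial
  have hderiv : ∀ n, ∀ a ≥ 0, 0 ≤ iteratedDeriv n f a := fun n a ha =>
    iteratedDeriv_nonneg_of_preservesHankel hf n ha
  have hc : ∀ n, 0 ≤ c n := fun n => div_nonneg (hderiv n 0 le_rfl) (by positivity)
  have hsummable : ∀ x, 0 ≤ x → Summable fun n => c n * x ^ n := fun x hx =>
    summable_of_sum_range_le (fun n => mul_nonneg (hc n) (by positivity)) fun n =>
      sum_taylor_le hanalytic hderiv n hx
  have hsum : AnalyticOnNhd ℝ (fun x => ∑' n, c n * x ^ n) Set.univ := fun x _ =>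
    analyticAt_tsum_mul_pow (hsummable (|x| + 1) (by positivity)) (lt_add_one _)
  have hlocal : f =ᶠ[𝓝 0] fun x => ∑' n, c n * x ^ n := by
    filter_upwards [hasSum_taylor_of_analyticAt (hanalytic 0 trivial)] with y hy
    rw [hy.tsum_eq, zero_add]
  have heq : f = fun x => ∑' n, c n * x ^ n := hanalytic.eq_of_eventuallyEq hsum hlocal
  refine ⟨c, hc, fun y _ => ?_⟩
  rw [heq]
  refine (Summable.of_norm ((hsummable |y| (abs_nonneg y)).congr fun n => ?_)).hasSum
  rw [norm_mul, norm_pow, Real.norm_of_nonneg (hc n), Real.norm_eq_abs]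

end OneVariable

namespace HasNonnegSeriesOn

variable {f : ℝ → ℝ}

lemma monotoneOn (hf : HasNonnegSeriesOn f (Set.Ioi 0)) : MonotoneOn f (Set.Ioi 0) := by
  obtain ⟨c, hc, hsum⟩ := hf
  refine fun y hy z hz hyz => hasSum_le (fun n => ?_) (hsum y hy) (hsum z hz)
  exact mul_le_mul_of_nonneg_left (pow_le_pow_left₀ (le_of_lt hy) hyz n) (hc n)

lemma div_const {S : Set ℝ} (hf : HasNonnegSeriesOn f S) {b : ℝ} (hb : 0 ≤ b) :
    HasNonnegSeriesOn (fun y => f y / b) S := by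
  obtain ⟨c, hc, hsum⟩ := hf
  refine ⟨fun n => c n / b, fun n => div_nonneg (hc n) hb, fun y hy => ?_⟩
  exact ((hsum y hy).div_const b).congr_fun fun n => by rw [div_mul_eq_mul_div]

lemma sub_eval_div_pow (hf : HasNonnegSeriesOn f (Set.Ioi 0)) {R : ℝ[X]} {M : ℕ}
    (hR : R.degree < M) (hO : (fun y => f y - R.eval y) =O[𝓝[>] 0] fun y => y ^ M) :
    HasNonnegSeriesOn (fun y => (f y - R.eval y) / y ^ M) (Set.Ioi 0) := by
  obtain ⟨c, hc, hsum⟩ := hf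
  have hdiff : ∀ y > 0, HasSum (fun n => (c n - R.coeff n) * y ^ n) (f y - R.eval y) := fun y hy =>
    ((hsum y hy).sub (hasSum_coeff_mul_pow R y)).congr_fun fun n => sub_mul _ _ _
  have hlow : ∀ i < M, c i - R.coeff i = 0 := fun i hi =>
    coeff_eq_zero_of_isBigO (eventually_mem_nhdsWithin.mono hdiff) hO hi
  refine ⟨fun n => c (n + M), fun n => hc _, fun y hy => ?_⟩
  have hshift := hasSum_shift_div_pow (ne_of_gt hy) (hdiff y hy) M
  rw [Finset.sum_eq_zero fun i hi => by rw [hlow i (Finset.mem_range.1 hi), zero_mul],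
    sub_zero] at hshift
  refine hshift.congr_fun fun n => ?_
  rw [(degree_lt_iff_coeff_zero R M).1 hR _ (Nat.le_add_left M n), sub_zero]

end HasNonnegSeriesOn

lemma abs_sub_sum_le_of_nonneg {a : ℕ → ℝ} (ha : ∀ n, 0 ≤ a n) {z A B : ℝ} (hz₀ : 0 < z)
    (hz₁ : z ≤ 1) (hA : HasSum (fun i => a i * z ^ i) A) (hB : HasSum a B) (n : ℕ) :
    |A - ∑ i ∈ Finset.range n, a i * z ^ i| ≤ B * z ^ n := by
  have hshift := hasSum_shift_div_pow hz₀.ne' hA n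
  have hle : (A - ∑ i ∈ Finset.range n, a i * z ^ i) / z ^ n ≤ B - ∑ i ∈ Finset.range n, a i :=
    hasSum_le (fun i => mul_le_of_le_one_right (ha _) (pow_le_one₀ hz₀.le hz₁)) hshift
      ((hasSum_nat_add_iff' n).2 hB)
  have hnonneg : 0 ≤ A - ∑ i ∈ Finset.range n, a i * z ^ i :=
    sub_nonneg.2 (sum_le_hasSum _ (fun i _ => mul_nonneg (ha i) (by positivity)) hA)
  rw [abs_of_nonneg hnonneg, ← div_le_iff₀ (by positivity)]
  exact hle.trans (sub_le_self _ (Finset.sum_nonneg fun i _ => ha i))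

section Coefficients

variable {Ψ : ℝ → ℝ → ℝ} {g : ℕ → ℝ → ℝ}

lemma isBigO_sub_sum_of_hasSum (hg : ∀ n, ∀ y > 0, 0 ≤ g n y)
    (hsum : ∀ t > 0, ∀ y > 0, HasSum (fun n => g n y * t ^ n) (Ψ t y))
    (hone : HasNonnegSeriesOn (Ψ 1) (Set.Ioi 0)) {θ : ℝ} (hθ : 0 < θ) {N : ℕ} (hN : N ≠ 0) (n : ℕ) :
    (fun y => Ψ (θ * y ^ N) y - ∑ i ∈ Finset.range n, g i y * (θ * y ^ N) ^ i)
      =O[𝓝[>] 0] fun y => y ^ (N * n) := by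
  have hsmall : ∀ᶠ y in 𝓝[>] (0 : ℝ), θ * y ^ N < 1 := by
    have hlim : Tendsto (fun y : ℝ => θ * y ^ N) (𝓝 0) (𝓝 (θ * 0 ^ N)) :=
      (continuous_const.mul (continuous_pow N)).tendsto 0
    rw [zero_pow hN, mul_zero] at hlim
    exact (hlim.mono_left nhdsWithin_le_nhds).eventually_lt_const one_pos
  refine Asymptotics.IsBigO.of_bound (Ψ 1 1 * θ ^ n) ?_
  filter_upwards [hsmall, Ioo_mem_nhdsGT one_pos] with y hθy hy
  have hy₀ : 0 < y := hy.1
  have hB : HasSum (fun i => g i y) (Ψ 1 y) := by simpa using hsum 1 one_pos y hy₀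
  rw [Real.norm_eq_abs, Real.norm_of_nonneg (by positivity)]
  calc _ ≤ Ψ 1 y * (θ * y ^ N) ^ n :=
        abs_sub_sum_le_of_nonneg (hg · y hy₀) (by positivity) hθy.le
          (hsum _ (by positivity) y hy₀) hB n
    _ ≤ Ψ 1 1 * (θ * y ^ N) ^ n := by
        gcongr
        exact hone.monotoneOn hy₀ (Set.mem_Ioi.2 one_pos) hy.2.le
    _ = Ψ 1 1 * θ ^ n * y ^ (N * n) := by ring

lemma degree_sum_mul_X_pow_lt {n N : ℕ} {Q : ℕ → ℝ[X]} (hQ : ∀ i < n, (Q i).natDegree < N) (θ : ℝ) :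
    (∑ i ∈ Finset.range n, Q i * (C θ * X ^ N) ^ i).degree < ((N * n : ℕ) : WithBot ℕ) := by
  rw [degree_lt_iff_coeff_zero]
  intro k hk
  rw [finsetSum_coeff]
  refine Finset.sum_eq_zero fun i hi => ?_
  have hi' : i < n := Finset.mem_range.1 hi
  have hle : N * (i + 1) ≤ k := (Nat.mul_le_mul_left N hi').trans hk
  rw [mul_pow, ← C_pow, ← pow_mul, mul_left_comm, coeff_C_mul, coeff_mul_X_pow', if_pos (by lia),
    coeff_eq_zero_of_natDegree_lt (by have := hQ i hi'; lia), mul_zero]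

lemma hasNonnegSeriesOn_sub_sum_div_pow (hg : ∀ n, ∀ y > 0, 0 ≤ g n y)
    (hsum : ∀ t > 0, ∀ y > 0, HasSum (fun n => g n y * t ^ n) (Ψ t y))
    (hone : HasNonnegSeriesOn (Ψ 1) (Set.Ioi 0)) {θ : ℝ} (hθ : 0 < θ) {N : ℕ} (hN : N ≠ 0)
    (hcurve : HasNonnegSeriesOn (fun y => Ψ (θ * y ^ N) y) (Set.Ioi 0)) {n : ℕ} {Q : ℕ → ℝ[X]}
    (hdeg : ∀ i < n, (Q i).natDegree < N) (hQ : ∀ i < n, ∀ y > 0, g i y = (Q i).eval y) :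
    HasNonnegSeriesOn (fun y => (Ψ (θ * y ^ N) y - ∑ i ∈ Finset.range n, g i y * (θ * y ^ N) ^ i) /
      (θ * y ^ N) ^ n) (Set.Ioi 0) := by
  let R := ∑ i ∈ Finset.range n, Q i * (C θ * X ^ N) ^ i
  have hR : ∀ y > 0, ∑ i ∈ Finset.range n, g i y * (θ * y ^ N) ^ i = R.eval y := fun y hy => by
    simp only [R, eval_finsetSum, eval_mul, eval_pow, eval_C, eval_X]
    exact Finset.sum_congr rfl fun i hi => by rw [hQ i (Finset.mem_range.1 hi) y hy]
  have hO : (fun y => Ψ (θ * y ^ N) y - R.eval y) =O[𝓝[>] 0] fun y => y ^ (N * n) := by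
    refine (isBigO_sub_sum_of_hasSum hg hsum hone hθ hN n).congr' ?_ .rfl
    filter_upwards [self_mem_nhdsWithin] with y hy
    rw [hR y hy]
  refine ((hcurve.sub_eval_div_pow (degree_sum_mul_X_pow_lt hdeg θ) hO).div_const
    (pow_nonneg hθ.le n)).congr fun y hy => ?_
  simp only [hR y hy]
  rw [div_div, mul_comm (y ^ (N * n)), mul_pow, pow_mul]

/-- For `N` large the terms of `∑ n, g n y * (θ * y ^ N) ^ n` live in disjoint ranges of degrees, so
removing the terms before the `n`-th one leaves a series with non-negative coefficients divisible by
`y ^ (N * n)`; letting `θ → 0` isolates `g n`. -/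
theorem hasNonnegSeriesOn_coeff (hg : ∀ n, ∀ y > 0, 0 ≤ g n y)
    (hsum : ∀ t > 0, ∀ y > 0, HasSum (fun n => g n y * t ^ n) (Ψ t y))
    (hcurve : ∀ θ > 0, ∀ N : ℕ, HasNonnegSeriesOn (fun y => Ψ (θ * y ^ N) y) (Set.Ioi 0))
    (hgrowth : ∀ n, ∃ (C : ℝ) (d : ℕ), ∀ y ≥ 1, g n y ≤ C * y ^ d) (n : ℕ) :
    HasNonnegSeriesOn (g n) (Set.Ioi 0) := by
  induction n using Nat.strong_induction_on with
  | _ n ih =>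
    choose C d hle using hgrowth
    have hpoly : ∀ i, ∃ Q : ℝ[X],
        i < n → Q.natDegree ≤ d i ∧ ∀ y > 0, g i y = Q.eval y := fun i => by
      by_cases hi : i < n
      · exact ((ih i hi).exists_polynomial_of_le_pow (hle i)).imp fun Q hQ _ => hQ.2
      · exact ⟨0, fun h => (hi h).elim⟩
    choose Q hQ using hpoly
    let N := (Finset.range n).sup d + 1
    have hone : HasNonnegSeriesOn (Ψ 1) (Set.Ioi 0) := by simpa using hcurve 1 one_pos 0
    have hdeg : ∀ i < n, (Q i).natDegree < N := fun i hi =>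
      Nat.lt_succ_of_le ((hQ i hi).1.trans (Finset.le_sup (Finset.mem_range.2 hi)))
    have htail := fun (θ : ℝ) (hθ : 0 < θ) =>
      hasNonnegSeriesOn_sub_sum_div_pow (N := N) hg hsum hone hθ (Nat.succ_ne_zero _)
        (hcurve θ hθ N) hdeg fun i hi => (hQ i hi).2
    refine .of_tendsto (l := 𝓝[>] 0) (fun y hy => ⟨le_of_lt hy, y + 1, ?_, lt_add_one y⟩)
      (eventually_mem_nhdsWithin.mono htail) fun y hy => ?_
    · exact Set.mem_Ioi.2 (add_pos hy one_pos)
    · have hscale : Tendsto (fun θ => θ * y ^ N) (𝓝[>] 0) (𝓝[>] 0) := by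
        simp_rw [mul_comm _ (y ^ N)]
        exact tendsto_iff_comap.2 (comap_mulLeft_nhdsGT_zero (pow_pos hy N)).ge
      exact (tendsto_sub_sum_div_pow (f := fun t => Ψ t y) (a := fun i => g i y)
        (eventually_mem_nhdsWithin.mono fun t ht => hsum t ht y hy) n).comp hscale

end Coefficients

section NonnegCoeff

variable {Q : ℝ[X]}

lemma eval_nonneg_of_coeff_nonneg (hQ : ∀ n, 0 ≤ Q.coeff n) {y : ℝ} (hy : 0 ≤ y) :
    0 ≤ Q.eval y := by
  rw [eval_eq_sum_range]
  exact Finset.sum_nonneg fun n _ => mul_nonneg (hQ n) (pow_nonneg hy n)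

lemma eval_le_eval_one_mul_pow (hQ : ∀ n, 0 ≤ Q.coeff n) {d : ℕ} (hd : Q.natDegree ≤ d) {y : ℝ}
    (hy : 1 ≤ y) : Q.eval y ≤ Q.eval 1 * y ^ d := by
  rw [eval_eq_sum_range, eval_eq_sum_range, Finset.sum_mul]
  refine Finset.sum_le_sum fun n hn => ?_
  rw [one_pow, mul_one]
  exact mul_le_mul_of_nonneg_left
    (pow_le_pow_right₀ hy ((Nat.lt_succ_iff.1 (Finset.mem_range.1 hn)).trans hd)) (hQ n)

lemma coeff_C_mul_X_pow_nonneg {a : ℝ} (ha : 0 ≤ a) (N n : ℕ) :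
    0 ≤ (C a * X ^ N : ℝ[X]).coeff n := by
  rw [coeff_C_mul_X_pow]
  split_ifs
  exacts [ha, le_rfl]

lemma coeff_mul_nonneg {P : ℝ[X]} (hP : ∀ n, 0 ≤ P.coeff n) (hQ : ∀ n, 0 ≤ Q.coeff n) (n : ℕ) :
    0 ≤ (P * Q).coeff n := by
  rw [coeff_mul]
  exact Finset.sum_nonneg fun p _ => mul_nonneg (hP _) (hQ _)

end NonnegCoeff

/-- Along every polynomial curve with non-negative coefficients, `F` is a polynomial with
non-negative coefficients in the parameter `y > 0`. -/
def IsNonnegPolyOnCurves {ι : Type*} (F : (ι → ℝ) → ℝ) : Prop :=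
  ∀ P : ι → ℝ[X], (∀ l n, 0 ≤ (P l).coeff n) →
    ∃ Q : ℝ[X], (∀ n, 0 ≤ Q.coeff n) ∧ ∀ y > 0, F (fun l => (P l).eval y) = Q.eval y

/-- The growth condition is imposed at `t = (y ^ e)⁻¹` because a function such as `F (t • x)` need
not grow polynomially in `x` for fixed `t`. -/
theorem exists_hasSum_isNonnegPolyOnCurves {κ : Type*} {G : ℝ → (κ → ℝ) → ℝ}
    (hG : ∀ (T : ℝ[X]) (P : κ → ℝ[X]), (∀ n, 0 ≤ T.coeff n) → (∀ l n, 0 ≤ (P l).coeff n) →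
      HasNonnegSeriesOn (fun y => G (T.eval y) fun l => (P l).eval y) (Set.Ioi 0))
    (hgrowth : ∀ P : κ → ℝ[X], (∀ l n, 0 ≤ (P l).coeff n) →
      ∃ (C : ℝ) (d e : ℕ), ∀ y ≥ 1, G (y ^ e)⁻¹ (fun l => (P l).eval y) ≤ C * y ^ d) :
    ∃ c : ℕ → (κ → ℝ) → ℝ, (∀ n, IsNonnegPolyOnCurves (c n)) ∧
      ∀ x, 0 ≤ x → ∀ t > 0, HasSum (fun n => c n x * t ^ n) (G t x) := by
  have hseries : ∀ x, ∃ c : ℕ → ℝ, 0 ≤ x → (∀ n, 0 ≤ c n) ∧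
      ∀ t > 0, HasSum (fun n => c n * t ^ n) (G t x) := fun x => by
    by_cases hx : 0 ≤ x
    · obtain ⟨c, hc, hsum⟩ := hG X (fun l => C (x l)) (fun n => by
        simpa using coeff_C_mul_X_pow_nonneg zero_le_one 1 n) fun l n => by
        simpa using coeff_C_mul_X_pow_nonneg (hx l) 0 n
      exact ⟨c, fun _ => ⟨hc, by simpa using hsum⟩⟩
    · exact ⟨0, fun h => (hx h).elim⟩
  choose c hc using hseries
  refine ⟨fun n x => c x n, fun n P hP => ?_, fun x hx => (hc x hx).2⟩
  have hP₀ : ∀ y > 0, (0 : κ → ℝ) ≤ fun l => (P l).eval y := fun y hy l =>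
    eval_nonneg_of_coeff_nonneg (hP l) (le_of_lt hy)
  have hle : ∀ n, ∃ (C : ℝ) (d : ℕ), ∀ y ≥ 1, c (fun l => (P l).eval y) n ≤ C * y ^ d := fun n => by
    obtain ⟨C, d, e, hbound⟩ := hgrowth P hP
    refine ⟨C, d + e * n, fun y hy => ?_⟩
    have hy₀ : 0 < y := one_pos.trans_le hy
    obtain ⟨hnonneg, hsum⟩ := hc _ (hP₀ y hy₀)
    have hterm := (le_hasSum (hsum (y ^ e)⁻¹ (by positivity)) n fun i _ =>
      mul_nonneg (hnonneg i) (by positivity)).trans (hbound y hy)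
    rw [inv_pow, ← div_eq_mul_inv, div_le_iff₀ (by positivity)] at hterm
    exact hterm.trans_eq (by ring)
  have hcurve := hasNonnegSeriesOn_coeff (Ψ := fun t y => G t fun l => (P l).eval y)
    (g := fun n y => c (fun l => (P l).eval y) n) (fun n y hy => (hc _ (hP₀ y hy)).1 n)
    (fun t ht y hy => (hc _ (hP₀ y hy)).2 t ht)
    (fun θ hθ N => by
      simpa using hG (C θ * X ^ N) P (coeff_C_mul_X_pow_nonneg (le_of_lt hθ) N) hP) hle n
  obtain ⟨C, d, hC⟩ := hle n
  obtain ⟨Q, hQ, -, heq⟩ := hcurve.exists_polynomial_of_le_pow hC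
  exact ⟨Q, hQ, heq⟩

lemma hasSum_prod_of_nonneg {α β : Type*} {f : α × β → ℝ} (hf : ∀ p, 0 ≤ f p) {g : α → ℝ} {s : ℝ}
    (hfiber : ∀ a, HasSum (fun b => f (a, b)) (g a)) (hg : HasSum g s) : HasSum f s := by
  have hsummable : Summable f := (summable_prod_of_nonneg hf).2
    ⟨fun a => (hfiber a).summable, hg.summable.congr fun a => (hfiber a).tsum_eq.symm⟩
  rw [hg.unique (hsummable.hasSum.prod_fiberwise hfiber)]
  exact hsummable.hasSum

/-- `F` is the sum on `S` of a power series in several variables with non-negative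
coefficients. -/
def HasNonnegMvSeriesOn {ι : Type*} [Fintype ι] (F : (ι → ℝ) → ℝ) (S : Set (ι → ℝ)) : Prop :=
  ∃ a : (ι → ℕ) → ℝ, (∀ α, 0 ≤ a α) ∧ ∀ x ∈ S, HasSum (fun α => a α * ∏ l, x l ^ α l) (F x)

lemma mul_prod_pow_nonneg {ι : Type*} [Fintype ι] {a : ℝ} (ha : 0 ≤ a) {x : ι → ℝ} (hx : 0 ≤ x)
    (α : ι → ℕ) :
    0 ≤ a * ∏ l, x l ^ α l :=
  mul_nonneg ha (Finset.prod_nonneg fun l _ => pow_nonneg (hx l) _)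

lemma eval_cons {m : ℕ} (T : ℝ[X]) (P : Fin m → ℝ[X]) (y : ℝ) :
    (fun l => eval y ((Fin.cons T P : Fin (m + 1) → ℝ[X]) l)) =
      Fin.cons (T.eval y) fun l => (P l).eval y := by
  funext l
  refine Fin.cases ?_ (fun l => ?_) l <;> simp only [Fin.cons_zero, Fin.cons_succ]

lemma IsNonnegPolyOnCurves.exists_hasSum_cons {m : ℕ} {F : (Fin (m + 1) → ℝ) → ℝ}
    (hF : IsNonnegPolyOnCurves F) :
    ∃ c : ℕ → (Fin m → ℝ) → ℝ, (∀ n, IsNonnegPolyOnCurves (c n)) ∧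
      ∀ x, 0 ≤ x → ∀ t > 0, HasSum (fun n => c n x * t ^ n) (F (Fin.cons t x)) := by
  have hpoly : ∀ (T : ℝ[X]) (P : Fin m → ℝ[X]), (∀ n, 0 ≤ T.coeff n) →
      (∀ l n, 0 ≤ (P l).coeff n) → ∃ Q : ℝ[X], (∀ n, 0 ≤ Q.coeff n) ∧
        ∀ y > 0, F (Fin.cons (T.eval y) fun l => (P l).eval y) = Q.eval y := fun T P hT hP => by
    simpa only [eval_cons] using
      hF (Fin.cons T P : Fin (m + 1) → ℝ[X]) fun l => Fin.cases hT hP l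
  refine exists_hasSum_isNonnegPolyOnCurves (G := fun t x => F (Fin.cons t x))
    (fun T P hT hP => ?_) fun P hP => ?_
  · obtain ⟨Q, hQ, heq⟩ := hpoly T P hT hP
    exact ⟨Q.coeff, hQ, fun y hy => by simpa only [heq y hy] using hasSum_coeff_mul_pow Q y⟩
  · obtain ⟨Q, hQ, heq⟩ := hpoly (C 1 * X ^ 0) P (coeff_C_mul_X_pow_nonneg zero_le_one 0) hP
    refine ⟨Q.eval 1, Q.natDegree, 0, fun y hy => ?_⟩
    have hcons := heq y (one_pos.trans_le hy)
    rw [eval_C_mul, eval_X_pow, pow_zero, mul_one] at hcons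
    rw [pow_zero, inv_one, hcons]
    exact eval_le_eval_one_mul_pow hQ le_rfl hy

lemma hasSum_prod_pow_of_cons {m : ℕ} {a : ℕ → (Fin m → ℕ) → ℝ} (ha : ∀ n α, 0 ≤ a n α)
    {c : ℕ → ℝ} {x : Fin (m + 1) → ℝ} (hx : 0 ≤ x) {s : ℝ}
    (hac : ∀ n, HasSum (fun α => a n α * ∏ l, Fin.tail x l ^ α l) (c n))
    (hc : HasSum (fun n => c n * x 0 ^ n) s) :
    HasSum (fun α : Fin (m + 1) → ℕ => a (α 0) (Fin.tail α) * ∏ l, x l ^ α l) s := by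
  rw [← (Fin.consEquiv fun _ => ℕ).hasSum_iff]
  refine hasSum_prod_of_nonneg (fun p => ?_) (fun n => ?_) hc
  · exact mul_prod_pow_nonneg (ha _ _) hx _
  · refine ((hac n).mul_right (x 0 ^ n)).congr_fun fun α => ?_
    simp only [Function.comp_apply, Fin.consEquiv, Equiv.coe_fn_mk, Fin.cons_zero, Fin.tail_cons,
      Fin.prod_univ_succ, Fin.cons_succ, Fin.tail]
    ring

theorem IsNonnegPolyOnCurves.hasNonnegMvSeriesOn {m : ℕ} {F : (Fin m → ℝ) → ℝ}
    (hF : IsNonnegPolyOnCurves F) : HasNonnegMvSeriesOn F {x | ∀ l, 0 < x l} := by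
  induction m with
  | zero =>
    obtain ⟨Q, hQ, heq⟩ := hF 0 fun l => l.elim0
    have hF₀ : ∀ x, F x = Q.eval 1 := fun x => by
      rw [← heq 1 one_pos]
      exact congrArg F (Subsingleton.elim _ _)
    refine ⟨fun _ => Q.eval 1, fun _ => eval_nonneg_of_coeff_nonneg hQ zero_le_one, fun x _ => ?_⟩
    rw [hF₀]
    simp only [Finset.univ_eq_empty, Finset.prod_empty, mul_one]
    exact hasSum_unique _
  | succ m ih =>
    obtain ⟨c, hc, hsum⟩ := hF.exists_hasSum_cons
    choose a ha hasum using fun n => ih (hc n)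
    refine ⟨fun α => a (α 0) (Fin.tail α), fun α => ha _ _, fun x hx => ?_⟩
    have htail : ∀ l, 0 < Fin.tail x l := fun l => hx l.succ
    have hx₀ := hsum (Fin.tail x) (fun l => (htail l).le) (x 0) (hx 0)
    rw [Fin.cons_self_tail] at hx₀
    exact hasSum_prod_pow_of_cons ha (fun l => (hx l).le) (fun n => hasum n _ htail) hx₀

section MvSeries

variable {ι : Type*} [Fintype ι] {F : (ι → ℝ) → ℝ} {S : Set (ι → ℝ)}

lemma hasNonnegMvSeriesOn_of_hasSum {p : ℕ → (ι → ℝ) → ℝ}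
    (hp : ∀ k, HasNonnegMvSeriesOn (p k) S) (hS : ∀ x ∈ S, 0 ≤ x) (hone : 1 ∈ S)
    (hF : ∀ x ∈ S, HasSum (fun k => p k x) (F x)) : HasNonnegMvSeriesOn F S := by
  choose a ha hasum using hp
  have hprod : ∀ x ∈ S, HasSum (fun q : (ι → ℕ) × ℕ => a q.2 q.1 * ∏ l, x l ^ q.1 l) (F x) :=
    fun x hx => (Equiv.prodComm _ _).hasSum_iff.1 <| hasSum_prod_of_nonneg
      (fun _ => mul_prod_pow_nonneg (ha _ _) (hS x hx) _) (fun k => hasum k x hx) (hF x hx)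
  have hsummable : ∀ α, Summable fun k => a k α := fun α => by
    simpa using (hprod 1 hone).summable.prod_factor α
  exact ⟨fun α => ∑' k, a k α, fun α => tsum_nonneg fun k => ha k α, fun x hx =>
    (hprod x hx).prod_fiberwise fun α => (hsummable α).hasSum.mul_right _⟩

lemma HasNonnegMvSeriesOn.of_continuous (h : HasNonnegMvSeriesOn F {x | ∀ l, 0 < x l})
    (hF : Continuous F) : HasNonnegMvSeriesOn F (Set.Ici 0) := by
  obtain ⟨a, ha, hsum⟩ := h
  refine ⟨a, ha, fun x hx => ?_⟩
  have hpos : ∀ ε > 0, ∀ l, 0 < x l + ε := fun ε hε l => add_pos_of_nonneg_of_pos (hx l) hε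
  have hlim : Tendsto (fun (ε : ℝ) l => x l + ε) (𝓝[>] 0) (𝓝 x) := by
    refine tendsto_nhdsWithin_of_tendsto_nhds ?_
    have hcont : Continuous fun (ε : ℝ) l => x l + ε := by fun_prop
    simpa using hcont.tendsto 0
  have hmem : ∀ᶠ ε : ℝ in 𝓝[>] 0, ε ∈ Set.Ioo 0 1 := Ioo_mem_nhdsGT one_pos
  refine hasSum_of_dominated (hsum _ (hpos 1 one_pos)).summable (fun α => ?_)
    (hmem.mono fun ε hε α => ?_) (hmem.mono fun ε hε => hsum _ (hpos ε hε.1))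
    ((hF.tendsto x).comp hlim)
  · have hcont : Continuous fun z : ι → ℝ => a α * ∏ l, z l ^ α l := by fun_prop
    exact (hcont.tendsto x).comp hlim
  · rw [Real.norm_of_nonneg (mul_prod_pow_nonneg (ha α) (fun l => (hpos ε hε.1 l).le) α)]
    exact mul_le_mul_of_nonneg_left (Finset.prod_le_prod
      (fun l _ => pow_nonneg (hpos ε hε.1 l).le _) fun l _ =>
        pow_le_pow_left₀ (hpos ε hε.1 l).le (by linarith [hε.2]) _) (ha α)

lemma hasSum_tsum_fiber_mul_pow {β : Type*} {d : β → ℕ} {g : β → ℝ} (hg : Summable g) {y s : ℝ}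
    (h : HasSum (fun b => g b * y ^ d b) s) :
    HasSum (fun n => (∑' b : {b // d b = n}, g b) * y ^ n) s := by
  refine ((Equiv.sigmaFiberEquiv d).hasSum_iff.2 h).sigma fun n => ?_
  refine ((hg.subtype {b | d b = n}).hasSum.mul_right (y ^ n)).congr_fun fun b => ?_
  simp only [Function.comp_apply, Equiv.sigmaFiberEquiv, Equiv.coe_fn_mk, show d b.1 = n from b.2]

/-- A one-variable series is determined by its values at positive parameters, so an identity of
series on the positive half-line propagates to the parameter `-1`. -/
lemma hasSum_neg_one_of_hasSum {β : Type*} {d : β → ℕ} {g : β → ℝ} (hg : ∀ b, 0 ≤ g b)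
    {f : ℝ → ℝ} (hf : HasNonnegSeriesOn f Set.univ)
    (h : ∀ y > 0, HasSum (fun b => g b * y ^ d b) (f y)) :
    HasSum (fun b => g b * (-1) ^ d b) (f (-1)) := by
  have hsummable : Summable g := by simpa using (h 1 one_pos).summable
  obtain ⟨c, -, hc⟩ := hf
  have hcoeff : c = fun n => ∑' b : {b // d b = n}, g b :=
    coeff_unique (Eventually.of_forall fun y => hc y trivial) <|
      eventually_mem_nhdsWithin.mono fun y hy => hasSum_tsum_fiber_mul_pow hsummable (h y hy)
  have hneg : Summable fun b => g b * (-1) ^ d b :=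
    .of_norm_bounded hsummable fun b => by simp [abs_of_nonneg (hg b)]
  have hfiber := hasSum_tsum_fiber_mul_pow hsummable hneg.hasSum
  exact (hcoeff ▸ hc (-1) trivial).unique hfiber ▸ hneg.hasSum

lemma mul_prod_mul_ite_pow (a y : ℝ) (z : ι → ℝ) (q : ι → Prop) [DecidablePred q] (α : ι → ℕ) :
    a * ∏ l, (z l * if q l then y else 1) ^ α l =
      (a * ∏ l, z l ^ α l) * y ^ ∑ l, if q l then α l else 0 := by
  simp only [mul_pow, Finset.prod_mul_distrib, ← Finset.prod_pow_eq_pow_sum, mul_assoc, ite_pow,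
    one_pow, pow_ite, pow_zero]

end MvSeries

namespace PreservesHankel

variable {ι : Type*} {F : (ι → ℝ) → ℝ}

lemma hasNonnegSeriesOn_curve (hF : PreservesHankel F) {P : ι → ℝ[X]}
    (hP : ∀ l n, 0 ≤ (P l).coeff n) :
    HasNonnegSeriesOn (fun y => F fun l => (P l).eval y) Set.univ :=
  hasNonnegSeriesOn_of_preservesHankel (hF.comp_eval P hP fun _ => ())

lemma exists_hasSum_smul [Finite ι] (hF : PreservesHankel F) :
    ∃ p : ℕ → (ι → ℝ) → ℝ, (∀ k, IsNonnegPolyOnCurves (p k)) ∧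
      ∀ x, 0 ≤ x → ∀ t > 0, HasSum (fun k => p k x * t ^ k) (F (t • x)) := by
  have := Fintype.ofFinite ι
  refine exists_hasSum_isNonnegPolyOnCurves (G := fun t x => F (t • x))
    (fun T P hT hP => ?_) fun P hP => ?_
  · obtain ⟨c, hc, hsum⟩ := hF.hasNonnegSeriesOn_curve fun l => coeff_mul_nonneg hT (hP l)
    simp only [eval_mul] at hsum
    exact ⟨c, hc, fun y _ => hsum y trivial⟩
  · refine ⟨F fun l => (P l).eval 1, 0, Finset.univ.sup fun l => (P l).natDegree, fun y hy => ?_⟩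
    have hy₀ : 0 < y := one_pos.trans_le hy
    rw [pow_zero, mul_one]
    refine hF.monotoneOn (fun l => ?_) (fun l => eval_nonneg_of_coeff_nonneg (hP l) zero_le_one)
      fun l => ?_
    · exact mul_nonneg (by positivity) (eval_nonneg_of_coeff_nonneg (hP l) hy₀.le)
    · rw [Pi.smul_apply, smul_eq_mul, inv_mul_le_iff₀ (by positivity), mul_comm]
      exact eval_le_eval_one_mul_pow (hP l)
        (Finset.le_sup (f := fun l => (P l).natDegree) (Finset.mem_univ l)) hy

lemma hasNonnegMvSeriesOn_of_Ici [Fintype ι] (hF : PreservesHankel F)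
    (h : HasNonnegMvSeriesOn F (Set.Ici 0)) : HasNonnegMvSeriesOn F Set.univ := by
  obtain ⟨a, ha, hsum⟩ := h
  refine ⟨a, ha, fun x _ => ?_⟩
  -- The curve `y ↦ |x l| * (if x l < 0 then y else 1)` passes through `|x|` at `1` and `x` at `-1`.
  let curve : ι → ℝ[X] := fun l => C |x l| * X ^ (if x l < 0 then 1 else 0)
  have hcurve : ∀ l y, (curve l).eval y = |x l| * if x l < 0 then y else 1 := fun l y => by
    simp only [curve, eval_C_mul, eval_X_pow]
    split_ifs <;> simp only [pow_one, pow_zero]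
  have hneg : (fun l => |x l| * if x l < 0 then -1 else 1) = x := by
    funext l
    split_ifs with hl
    · rw [abs_of_neg hl, mul_neg_one, neg_neg]
    · rw [abs_of_nonneg (not_lt.1 hl), mul_one]
  have hseries := hF.hasNonnegSeriesOn_curve (P := curve) fun l =>
    coeff_C_mul_X_pow_nonneg (abs_nonneg (x l)) _
  simp only [hcurve] at hseries
  have hx := hasSum_neg_one_of_hasSum (d := fun α => ∑ l, if x l < 0 then α l else 0)
    (fun α => mul_prod_pow_nonneg (ha α) (fun l => abs_nonneg (x l)) α) hseries fun y hy => by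
      simpa only [mul_prod_mul_ite_pow] using hsum (fun l => |x l| * if x l < 0 then y else 1)
        fun l => mul_nonneg (abs_nonneg _) (by split_ifs <;> simp [le_of_lt hy])
  simp only [← mul_prod_mul_ite_pow] at hx
  simpa only [hneg, congrFun hneg] using hx

theorem hasNonnegMvSeriesOn {m : ℕ} {F : (Fin m → ℝ) → ℝ} (hF : PreservesHankel F) :
    HasNonnegMvSeriesOn F Set.univ := by
  obtain ⟨p, hp, hsum⟩ := hF.exists_hasSum_smul
  have hpos : HasNonnegMvSeriesOn F {x | ∀ l, 0 < x l} :=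
    hasNonnegMvSeriesOn_of_hasSum (fun k => (hp k).hasNonnegMvSeriesOn)
      (fun x hx l => (hx l).le) (fun _ => one_pos) fun x hx => by
        simpa using hsum x (fun l => (hx l).le) 1 one_pos
  exact hF.hasNonnegMvSeriesOn_of_Ici (hpos.of_continuous hF.continuous)

end PreservesHankel

section Converse

lemma posSemidef_finset_prod {n β : Type*} [Finite n] {A : β → Matrix n n ℝ}
    (hA : ∀ b, (A b).PosSemidef) (s : Finset β) :
    (Matrix.of fun i j => ∏ b ∈ s, A b i j).PosSemidef := by
  classical
  induction s using Finset.induction_on with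
  | empty =>
    have hone : (Matrix.of fun i j => ∏ b ∈ ∅, A b i j) =
        Matrix.vecMulVec (1 : n → ℝ) (star 1) := by
      ext i j
      simp [Matrix.vecMulVec]
    rw [hone]
    exact Matrix.posSemidef_vecMulVec_self_star 1
  | insert b s hb ih =>
    have hhadamard : (Matrix.of fun i j => ∏ b ∈ insert b s, A b i j) =
        (A b).hadamard (Matrix.of fun i j => ∏ b ∈ s, A b i j) := by
      ext i j
      simp only [Matrix.of_apply, Finset.prod_insert hb, Matrix.hadamard_apply]
    rw [hhadamard]
    exact (hA b).hadamard ih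

lemma posSemidef_entrywise_pow {n : Type*} [Finite n] {A : Matrix n n ℝ} (hA : A.PosSemidef)
    (k : ℕ) : (Matrix.of fun i j => A i j ^ k).PosSemidef := by
  simpa using posSemidef_finset_prod (fun _ : ℕ => hA) (Finset.range k)

lemma posSemidef_of_hasSum {n β : Type*} [Finite n] {A : β → Matrix n n ℝ} {B : Matrix n n ℝ}
    (hA : ∀ b, (A b).PosSemidef) (hB : HasSum A B) : B.PosSemidef := by
  have := Fintype.ofFinite n
  refine .of_dotProduct_mulVec_nonneg ?_ fun x => ?_
  · refine HasSum.unique (hB.matrix_conjTranspose.congr_fun fun b => ?_) hB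
    exact (hA b).isHermitian.symm
  · have hquad : HasSum (fun b => star x ⬝ᵥ (A b).mulVec x) (star x ⬝ᵥ B.mulVec x) :=
      hasSum_sum fun i _ => (hasSum_sum fun j _ =>
        (Pi.hasSum.1 (Pi.hasSum.1 hB i) j).mul_right (x j)).mul_left _
    exact hquad.nonneg fun b => (hA b).dotProduct_mulVec_nonneg x

variable {ι : Type*} [Fintype ι] {F : (ι → ℝ) → ℝ}

lemma HasNonnegMvSeriesOn.posSemidef (hF : HasNonnegMvSeriesOn F Set.univ) {n : Type*} [Finite n]
    {A : ι → Matrix n n ℝ} (hA : ∀ l, (A l).PosSemidef) :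
    (Matrix.of fun i j => F fun l => A l i j).PosSemidef := by
  obtain ⟨c, hc, hsum⟩ := hF
  refine posSemidef_of_hasSum (A := fun α => c α • Matrix.of fun i j => ∏ l, A l i j ^ α l)
    (fun α => (posSemidef_finset_prod (fun l => posSemidef_entrywise_pow (hA l) (α l)) _).smul
      (hc α)) ?_
  exact Pi.hasSum.2 fun i => Pi.hasSum.2 fun j => hsum _ trivial

lemma HasNonnegMvSeriesOn.exists_moment (hF : HasNonnegMvSeriesOn F Set.univ)
    {μ : ι → Measure ℝ} (hμ : ∀ l, IsAdmissible (μ l))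
    (hμI : ∀ l, μ l (Set.Icc (-1 : ℝ) 1)ᶜ = 0) :
    ∃ σ : Measure ℝ, IsAdmissible σ ∧ ∀ k : ℕ, F (fun l => moment (μ l) k) = moment σ k := by
  obtain ⟨c, hc, hsum⟩ := hF
  have hmonomial : ∀ α : ι → ℕ, (∏ l, moment (μ l) ^ α l) ∈ momentAlgebra := fun α =>
    prod_mem fun l _ => pow_mem (mem_momentAlgebra.2 ⟨μ l, hμ l, hμI l, rfl⟩) _
  choose ρ hρ hρI hρs using fun α => mem_momentAlgebra.1 (hmonomial α)
  let σ : (ι → ℕ) → Measure ℝ := fun α => ENNReal.ofReal (c α) • ρ α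
  have hintegral : ∀ α (f : ℝ → ℝ), ∫ x, f x ∂σ α = c α * ∫ x, f x ∂ρ α := fun α f => by
    rw [integral_smul_measure, ENNReal.toReal_ofReal (hc α), smul_eq_mul]
  have hmoment : ∀ k, HasSum (fun α => c α * moment (ρ α) k) (F fun l => moment (μ l) k) :=
    fun k => by simpa [hρs] using hsum (fun l => moment (μ l) k) trivial
  have hσ : IsAdmissible (Measure.sum σ) := fun k => by
    refine integrable_sum_measure (fun α => (hρ α k).smul_measure ENNReal.ofReal_ne_top) ?_
    refine .of_nonneg_of_le (fun α => integral_nonneg fun x => norm_nonneg _) (fun α => ?_)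
      (hmoment 0).summable
    rw [hintegral]
    exact mul_le_mul_of_nonneg_left (integral_norm_pow_le_moment_zero (hρ α) (hρI α) k) (hc α)
  refine ⟨Measure.sum σ, hσ, fun k => (hmoment k).unique ?_⟩
  simpa only [hintegral, moment] using hasSum_integral_measure (hσ k)

end Converse

end MomentTransform

/-- Multivariable moment transformers: a function of `m` variables maps `m`-tuples of
moment sequences of admissible measures on `[-1,1]` to moment sequences iff it preserves
positive semidefiniteness on tuples of positive semidefinite matrices of all sizes, iff
it is given by a power series in `m` variables with non-negative coefficients converging
everywhere on `ℝ^m`. -/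
theorem multivariable_moment_transform_TFAE (m : ℕ) (hm : 1 ≤ m)
    (F : (Fin m → ℝ) → ℝ) :
    List.TFAE
      [∀ μ : Fin m → Measure ℝ, (∀ l, IsAdmissible (μ l)) →
          (∀ l, μ l (Set.Icc (-1 : ℝ) 1)ᶜ = 0) →
          ∃ σ : Measure ℝ, IsAdmissible σ ∧
            ∀ k : ℕ, F (fun l => moment (μ l) k) = moment σ k,
        ∀ (N : ℕ) (A : Fin m → Matrix (Fin N) (Fin N) ℝ), (∀ l, (A l).PosSemidef) →
          (Matrix.of fun i j : Fin N => F (fun l => A l i j)).PosSemidef,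
        ∃ c : (Fin m → ℕ) → ℝ, (∀ α, 0 ≤ c α) ∧
          ∀ x : Fin m → ℝ,
            HasSum (fun α : Fin m → ℕ => c α * ∏ l, x l ^ α l) (F x)] := by
  have hseries : MomentTransform.HasNonnegMvSeriesOn F Set.univ ↔
      ∃ c : (Fin m → ℕ) → ℝ, (∀ α, 0 ≤ c α) ∧
        ∀ x : Fin m → ℝ, HasSum (fun α => c α * ∏ l, x l ^ α l) (F x) := by
    simp only [MomentTransform.HasNonnegMvSeriesOn, Set.mem_univ, forall_const]
  rw [← hseries]
  tfae_have 1 → 3 := fun h =>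
    (MomentTransform.preservesHankel_of_maps_moments h).hasNonnegMvSeriesOn
  tfae_have 2 → 3 := fun h =>
    (MomentTransform.preservesHankel_of_maps_posSemidef h).hasNonnegMvSeriesOn
  tfae_have 3 → 1 := fun h μ hμ hμI => h.exists_moment hμ hμI
  tfae_have 3 → 2 := fun h N A hA => h.posSemidef hA
  tfae_finish
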